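/- For every A > 0, the triangular lattice Λ_A is the unique, up to rotation, minimizer of the Thomas-Fermi energy E_TF among all Bravais lattices of ℝ² of area A: E_TF(Λ_A) ≤ E_TF(L) for every Bravais lattice L with |L| = A, with equality only if L is the image of Λ_A under a linear isometry of ℝ². -/

import Mathlib

/-!
The substitution `t = σ + log (2 / ρ)` turns `K₀` into a positive superposition of Gaussians,
`K₀(ρ) = 1/2 ∫ exp (-e^σ - (ρ²/4) e^{-σ}) dσ`. Consequently the Thomas-Fermi energy of a lattice of
area `A` whose Gram matrix is that of `A * latForm x s` is a superposition, with positive weights, of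
the theta functions `latTheta p x s - 1` with `p = (π / 4) A e^{-σ}` (`tsum_WTF_eq`). It therefore
suffices to prove Montgomery's theorem (`latTheta_hex_lt`): for each `p > 0`, in the reduced region
`0 ≤ x ≤ 1/2`, `0 < s ≤ 2/√3`, which every lattice reaches by Gauss reduction
(`exists_reduced_basis`), the theta function is strictly minimised at `x = 1/2`, `s = 2/√3`, the
triangular lattice.

Poisson summation relates `p` and `π² / p` (`latTheta_dual`), so that one may assume `p ≥ π`. Then
there are three ingredients.

* If `p s < 2.52`, the row through the origin alone exceeds the triangular value
  (`latTheta_hex_lt_of_small`).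
* Otherwise sliding the rows to `x = 1/2` strictly decreases the theta function
  (`latTheta_half_lt`): the rows `n = ±1` grow quadratically away from `1/2`, while the rows
  `|n| ≥ 2` carry too little mass to compensate.
* On the line `x = 1/2` every exponential is bounded below by its tangent at `s = 2/√3`
  (`latTheta_hex_lt_rhombic`). The sixfold symmetry of the triangular lattice makes the linear terms
  cancel (`hasSum_hex_critical`), and the convexity gain at the vectors `(0, ±1)` exceeds the
  second-order loss.

Since the inequality between theta functions is strict at every `p`, so is the one between the
energies. Equality of energies thus forces `x = 1/2` and `s = 2/√3`, and lattices with equal Gram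
matrices are congruent (`isRotationOf_of_hasForm`).
-/

noncomputable section
open Real

abbrev R2 := EuclideanSpace ℝ (Fin 2)

def vec2 (x y : ℝ) : R2 := (WithLp.equiv 2 (Fin 2 → ℝ)).symm ![x, y]

/-- `L` is the Bravais lattice generated by the basis `(u, v)` of `ℝ²`. -/
def LatticeBasis (L : Set R2) (u v : R2) : Prop :=
  LinearIndependent ℝ ![u, v] ∧
    L = {x : R2 | ∃ m n : ℤ, x = (m : ℝ) • u + (n : ℝ) • v}

/-- `L` is a Bravais lattice of `ℝ²`. -/
def IsBravais (L : Set R2) : Prop := ∃ u v : R2, LatticeBasis L u v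

/-- The area `|L| = ‖u‖‖v‖|sin θ|` of a Bravais lattice. -/
def HasArea (L : Set R2) (A : ℝ) : Prop :=
  ∃ u v : R2, LatticeBasis L u v ∧
    ‖u‖ * ‖v‖ * |Real.sin (InnerProductGeometry.angle u v)| = A

/-- The Lennard-Jones potential. -/
def VLJ (r : ℝ) : ℝ := r ^ (-12 : ℤ) - 2 * r ^ (-6 : ℤ)

/-- The Lennard-Jones energy of a lattice. -/
def ELJ (L : Set R2) : ℝ := ∑' x : {x : R2 // x ∈ L ∧ x ≠ 0}, VLJ ‖(x : R2)‖

/-- The Epstein zeta function of a lattice. -/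
def zetaL (L : Set R2) (s : ℝ) : ℝ := ∑' x : {x : R2 // x ∈ L ∧ x ≠ 0}, ‖(x : R2)‖ ^ (-s)

/-- The theta function of a lattice. -/
def thetaL (L : Set R2) (α : ℝ) : ℝ := ∑' x : L, Real.exp (-2 * π * α * ‖(x : R2)‖ ^ 2)

/-- The triangular lattice of area `A`. -/
def triLattice (A : ℝ) : Set R2 :=
  {x : R2 | ∃ m n : ℤ, x =
      (m : ℝ) • (Real.sqrt (2 * A / Real.sqrt 3) • vec2 1 0) +
      (n : ℝ) • (Real.sqrt (2 * A / Real.sqrt 3) • vec2 (1/2) (Real.sqrt 3 / 2))}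

/-- `L` is the image of `M` under a linear isometry of `ℝ²`. -/
def IsRotationOf (L M : Set R2) : Prop := ∃ f : R2 ≃ₗᵢ[ℝ] R2, L = f '' M

/-- The modified Bessel function of the second kind `K₀(r) = ∫_0^∞ e^{−r cosh t} dt`. -/
def K0 (r : ℝ) : ℝ := ∫ t in Set.Ioi (0 : ℝ), Real.exp (-r * Real.cosh t)

/-- The Thomas-Fermi potential `W_TF(r) = (1/2) K₀(√π r)`. -/
def WTF (r : ℝ) : ℝ := (1 / 2) * K0 (Real.sqrt π * r)

/-- The Thomas-Fermi energy of a lattice. -/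
def ETF (L : Set R2) : ℝ := ∑' x : {x : R2 // x ∈ L ∧ x ≠ 0}, WTF ‖(x : R2)‖

/-! ### One-dimensional Gaussian sums -/

lemma summable_gauss {c : ℝ} (hc : 0 < c) : Summable fun m : ℤ => Real.exp (-c * (m : ℝ) ^ 2) := by
  have key : Summable fun m : ℕ => Real.exp (-c * (m : ℝ) ^ 2) := by
    refine Summable.of_nonneg_of_le (fun _ => (Real.exp_pos _).le) (fun m => ?_)
      (Real.summable_exp_nat_mul_iff.2 (neg_lt_zero.2 hc))
    apply Real.exp_le_exp.2
    have : (m : ℝ) ≤ (m : ℝ) ^ 2 := by exact_mod_cast Nat.le_self_pow (by norm_num) m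
    nlinarith
  refine Summable.of_nat_of_neg ?_ ?_
  · simpa using key
  · simpa using key

/-- The one-dimensional Gaussian sum `∑_m exp (-c (m + u)²)`, a theta function in `u`. -/
def thetaShift (c u : ℝ) : ℝ := ∑' m : ℤ, Real.exp (-c * ((m : ℝ) + u) ^ 2)

lemma summable_gauss_shift {c : ℝ} (hc : 0 < c) (u : ℝ) :
    Summable fun m : ℤ => Real.exp (-c * ((m : ℝ) + u) ^ 2) := by
  refine Summable.of_nonneg_of_le (fun _ => (Real.exp_pos _).le) (fun m => ?_)
    ((summable_gauss (half_pos hc)).mul_left (Real.exp (c * u ^ 2)))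
  rw [← Real.exp_add]
  apply Real.exp_le_exp.2
  nlinarith [mul_nonneg hc.le (sq_nonneg ((m : ℝ) + 2 * u))]

lemma hasSum_thetaShift {c : ℝ} (hc : 0 < c) (u : ℝ) :
    HasSum (fun m : ℤ => Real.exp (-c * ((m : ℝ) + u) ^ 2)) (thetaShift c u) :=
  (summable_gauss_shift hc u).hasSum

lemma thetaShift_nonneg (c u : ℝ) : 0 ≤ thetaShift c u := tsum_nonneg fun _ => (Real.exp_pos _).le

/-- `thetaShift c` is even about every half-integer, being even and `1`-periodic. -/
lemma thetaShift_symm {c u : ℝ} {k : ℤ} (hk : 2 * u = k) (d : ℝ) :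
    thetaShift c (u + d) = thetaShift c (u - d) := by
  unfold thetaShift
  rw [← (Equiv.subLeft (-k)).tsum_eq]
  refine tsum_congr fun m => ?_
  congr 2
  simp only [Equiv.subLeft_apply]
  push_cast
  rw [← hk]
  ring

/-- Symmetrizing about a half-integer `u`, the translate by `d` becomes a `cosh`-weighted sum. -/
lemma hasSum_thetaShift_cosh {c u : ℝ} (hc : 0 < c) {k : ℤ} (hk : 2 * u = k) (d : ℝ) :
    HasSum (fun m : ℤ => Real.exp (-c * ((m : ℝ) + u) ^ 2) *
      (Real.exp (-c * d ^ 2) * Real.cosh (2 * c * ((m : ℝ) + u) * d))) (thetaShift c (u + d)) := by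
  have h1 := hasSum_thetaShift hc (u + d)
  have h2 := hasSum_thetaShift hc (u - d)
  rw [← thetaShift_symm hk d] at h2
  have h3 := (h1.add h2).mul_left (1 / 2)
  rw [← two_mul, ← mul_assoc, show (1 / 2 * 2 : ℝ) = 1 by norm_num, one_mul] at h3
  refine (congrArg (HasSum · (thetaShift c (u + d))) (funext fun m => ?_)).mpr h3
  have e1 : -c * ((m : ℝ) + (u + d)) ^ 2 =
    -c * ((m : ℝ) + u) ^ 2 + (-c * d ^ 2 + -(2 * c * ((m : ℝ) + u) * d)) := by ring
  have e2 : -c * ((m : ℝ) + (u - d)) ^ 2 =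
    -c * ((m : ℝ) + u) ^ 2 + (-c * d ^ 2 + 2 * c * ((m : ℝ) + u) * d) := by ring
  rw [e1, e2, Real.cosh_eq]
  simp only [Real.exp_add]
  ring

/-- Near a half-integer the Gaussian sum cannot drop faster than quadratically, because
`exp (-c d²) cosh (⋯) ≥ exp (-c d²) ≥ 1 - c d²`. -/
lemma thetaShift_lower {c u : ℝ} (hc : 0 < c) {k : ℤ} (hk : 2 * u = k) (d : ℝ) :
    thetaShift c u * (1 - c * d ^ 2) ≤ thetaShift c (u + d) := by
  refine hasSum_le (fun m => ?_) ((hasSum_thetaShift hc u).mul_right _) (hasSum_thetaShift_cosh hc hk d)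
  refine mul_le_mul_of_nonneg_left ?_ (Real.exp_pos _).le
  have h1 := Real.add_one_le_exp (-c * d ^ 2)
  have h2 := Real.one_le_cosh (2 * c * ((m : ℝ) + u) * d)
  nlinarith [Real.exp_pos (-c * d ^ 2)]

lemma cosh_lower (u : ℝ) : 1 + u ^ 2 / 2 + u ^ 4 / 24 + u ^ 6 / 720 ≤ Real.cosh u := by
  have h := Real.hasSum_cosh u
  have := sum_le_hasSum (Finset.range 4) (fun i _ => by
    rw [pow_mul]; positivity) h
  simpa [Finset.sum_range_succ, Nat.factorial] using this

/-- The value `2.52` is the threshold for `p * s` separating the elongated lattices, for which the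
row through the origin suffices, from those whose rows are slid to `x = 1/2`. -/
lemma cosh_gauss_base {d : ℝ} (h0 : 0 ≤ d) (h1 : d ≤ 1 / 2) :
    (1 + 0.05 * d ^ 2) ≤ Real.exp (-2.52 * d ^ 2) * Real.cosh (2.52 * d) := by
  have h2 := cosh_lower (2.52 * d)
  have hv0 : 0 ≤ d ^ 2 := sq_nonneg d
  have hv1 : d ^ 2 ≤ 1 / 4 := by nlinarith
  have h3 := Real.exp_bound' (x := 2.52 * d ^ 2) (by positivity) (by linarith) (n := 4) (by norm_num)
  simp [Finset.sum_range_succ, Nat.factorial] at h3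
  have e : Real.exp (-2.52 * d ^ 2) * Real.exp (2.52 * d ^ 2) = 1 := by
    rw [← Real.exp_add]; ring_nf; simp
  have key : (1 + 0.05 * d ^ 2) * Real.exp (2.52 * d ^ 2) ≤ Real.cosh (2.52 * d) := by
    refine le_trans (mul_le_mul_of_nonneg_left h3 (by positivity)) (le_trans ?_ h2)
    set v := d ^ 2 with hv
    have e4 : d ^ 4 = v ^ 2 := by rw [hv]; ring
    have e6 : d ^ 6 = v ^ 3 := by rw [hv]; ring
    simp only [mul_pow, e4, e6, ← hv]
    have a2 : v ^ 2 ≤ v / 4 := by nlinarith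
    have a3 : v ^ 3 ≤ v / 16 := by nlinarith
    have a4 : v ^ 4 ≤ v / 64 := by nlinarith
    have a5 : v ^ 5 ≤ v / 256 := by nlinarith
    ring_nf
    nlinarith
  calc (1 + 0.05 * d ^ 2) = Real.exp (-2.52 * d ^ 2) *
        ((1 + 0.05 * d ^ 2) * Real.exp (2.52 * d ^ 2)) := by linear_combination -(1 + 0.05 * d ^ 2) * e
    _ ≤ _ := mul_le_mul_of_nonneg_left key (Real.exp_pos _).le

/-- The left side grows with `c`, so the case `c = 2.52` suffices. -/
lemma cosh_gauss {c d : ℝ} (hc : 2.52 ≤ c) (h0 : 0 ≤ d) (h1 : d ≤ 1 / 2) :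
    (1 + 0.05 * d ^ 2) ≤ Real.exp (-c * d ^ 2) * Real.cosh (c * d) := by
  refine le_trans (cosh_gauss_base h0 h1) ?_
  have form : ∀ t : ℝ, Real.exp (-t * d ^ 2) * Real.cosh (t * d) =
      1 / 2 * (Real.exp (t * (d * (1 - d))) + Real.exp (-t * (d * (1 + d)))) := fun t => by
    rw [Real.cosh_eq, mul_div_assoc', mul_add, ← Real.exp_add, ← Real.exp_add]
    ring_nf
  rw [form, form]
  have hsplit1 : Real.exp (c * (d * (1 - d))) = Real.exp (2.52 * (d * (1 - d))) *
      Real.exp ((c - 2.52) * (d * (1 - d))) := by rw [← Real.exp_add]; ring_nf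
  have hsplit2 : Real.exp (-c * (d * (1 + d))) = Real.exp (-2.52 * (d * (1 + d))) *
      Real.exp (-((c - 2.52) * (d * (1 + d)))) := by rw [← Real.exp_add]; ring_nf
  have hrel : Real.exp (2.52 * (d * (1 - d))) = Real.exp (-2.52 * (d * (1 + d))) *
      Real.exp (5.04 * d) := by rw [← Real.exp_add]; ring_nf
  have b1 := Real.add_one_le_exp ((c - 2.52) * (d * (1 - d)))
  have b2 := Real.add_one_le_exp (-((c - 2.52) * (d * (1 + d))))
  have b3 := Real.add_one_le_exp (5.04 * d)
  have hE := Real.exp_pos (-2.52 * (d * (1 + d)))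
  rw [hsplit1, hsplit2, hrel]
  set E := Real.exp (-2.52 * (d * (1 + d)))
  set F := Real.exp (5.04 * d)
  have hF : 0 < F := Real.exp_pos _
  have g1 : E * F * ((c - 2.52) * (d * (1 - d)) + 1) ≤
    E * F * Real.exp ((c - 2.52) * (d * (1 - d))) := mul_le_mul_of_nonneg_left b1 (by positivity)
  have g2 : E * (-((c - 2.52) * (d * (1 + d))) + 1) ≤
    E * Real.exp (-((c - 2.52) * (d * (1 + d)))) := mul_le_mul_of_nonneg_left b2 hE.le
  have g3 : (1 + d) ≤ F * (1 - d) := by nlinarith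
  have g4 : 0 ≤ E * ((c - 2.52) * d) * (F * (1 - d) - (1 + d)) :=
    mul_nonneg (mul_nonneg hE.le (mul_nonneg (by linarith) h0)) (by linarith)
  nlinarith

/-- Quadratic growth of the Gaussian sum away from its minimum at `1/2`. -/
lemma thetaShift_half_growth {c d : ℝ} (hc : 2.52 ≤ c) (h0 : 0 ≤ d) (h1 : d ≤ 1 / 2) :
    thetaShift c (1 / 2) * (1 + 0.05 * d ^ 2) ≤ thetaShift c (1 / 2 + d) := by
  have hc0 : 0 < c := by linarith
  refine hasSum_le (fun m => ?_) ((hasSum_thetaShift hc0 _).mul_right _)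
    (hasSum_thetaShift_cosh hc0 (k := 1) (by norm_num) d)
  refine mul_le_mul_of_nonneg_left ?_ (Real.exp_pos _).le
  refine (cosh_gauss hc h0 h1).trans (mul_le_mul_of_nonneg_left ?_ (Real.exp_pos _).le)
  rw [Real.cosh_le_cosh, abs_of_nonneg (by positivity)]
  have hm : 1 ≤ |2 * (m : ℝ) + 1| := by
    have : (1 : ℤ) ≤ |2 * m + 1| := Int.one_le_abs (by omega)
    exact_mod_cast this
  rw [show 2 * c * ((m : ℝ) + 1 / 2) * d = (c * d) * (2 * (m : ℝ) + 1) by ring, abs_mul,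
    abs_of_nonneg (show 0 ≤ c * d by positivity)]
  exact le_mul_of_one_le_right (by positivity) hm

lemma thetaShift_ge_zero_term {c : ℝ} (hc : 0 < c) : 1 + 2 * Real.exp (-c) ≤ thetaShift c 0 := by
  have := sum_le_hasSum ({0, 1, -1} : Finset ℤ) (fun i _ => (Real.exp_pos _).le) (hasSum_thetaShift hc 0)
  rw [Finset.sum_insert (by decide), Finset.sum_insert (by decide), Finset.sum_singleton] at this
  norm_num at this
  linarith

lemma thetaShift_half_lower {c : ℝ} (hc : 0 < c) : 2 * Real.exp (-c / 4) ≤ thetaShift c (1 / 2) := by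
  have := sum_le_hasSum ({0, -1} : Finset ℤ) (fun i _ => (Real.exp_pos _).le)
    (hasSum_thetaShift hc (1 / 2))
  rw [Finset.sum_insert (by decide), Finset.sum_singleton] at this
  norm_num at this
  rw [show -c / 4 = -(c * (1 / 4)) by ring]
  linarith

/-- A two-sided sum whose terms are bounded by geometric series, `C ρⁿ` for the nonnegative and
`D ρⁿ` for the negative indices. -/
lemma tsum_int_le_geom {f : ℤ → ℝ} {C D ρ : ℝ} (hρ0 : 0 ≤ ρ) (hρ : ρ < 1) (hf : Summable f)
    (h1 : ∀ n : ℕ, f n ≤ C * ρ ^ n) (h2 : ∀ n : ℕ, f (-(n + 1)) ≤ D * ρ ^ n) :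
    ∑' m, f m ≤ (C + D) / (1 - ρ) := by
  have i1 : Function.Injective (fun n : ℕ => (n : ℤ)) := Nat.cast_injective
  have i2 : Function.Injective (fun n : ℕ => (-((n : ℤ) + 1))) := fun a b h => by
    simpa using h
  have s1 : Summable fun n : ℕ => f n := hf.comp_injective i1
  have s2 : Summable fun n : ℕ => f (-(n + 1)) := hf.comp_injective i2
  rw [tsum_of_nat_of_neg_add_one s1 s2]
  have g := hasSum_geometric_of_lt_one hρ0 hρ
  have a := hasSum_le h1 s1.hasSum (g.mul_left C)
  have b := hasSum_le h2 s2.hasSum (g.mul_left D)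
  rw [add_div, div_eq_mul_inv, div_eq_mul_inv]
  exact add_le_add a b

/-- Variant of `tsum_int_le_geom` in which the central term is kept exactly. -/
lemma tsum_int_le_center_geom {f : ℤ → ℝ} {C D ρ : ℝ} (hρ0 : 0 ≤ ρ) (hρ : ρ < 1) (hf : Summable f)
    (h1 : ∀ n : ℕ, f ((n + 1 : ℕ) : ℤ) ≤ C * ρ ^ n) (h2 : ∀ n : ℕ, f (-(n + 1)) ≤ D * ρ ^ n) :
    ∑' m, f m ≤ f 0 + (C + D) / (1 - ρ) := by
  have i1 : Function.Injective (fun n : ℕ => (n : ℤ)) := Nat.cast_injective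
  have i2 : Function.Injective (fun n : ℕ => (-((n : ℤ) + 1))) := fun a b h => by
    simpa using h
  have s1 : Summable fun n : ℕ => f n := hf.comp_injective i1
  have s2 : Summable fun n : ℕ => f (-(n + 1)) := hf.comp_injective i2
  have s3 : Summable fun n : ℕ => f ((n + 1 : ℕ) : ℤ) := (summable_nat_add_iff 1).2 s1
  rw [tsum_of_nat_of_neg_add_one s1 s2, s1.tsum_eq_zero_add]
  have g := hasSum_geometric_of_lt_one hρ0 hρ
  have a := hasSum_le h1 s3.hasSum (g.mul_left C)
  have b := hasSum_le h2 s2.hasSum (g.mul_left D)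
  rw [add_div, div_eq_mul_inv, div_eq_mul_inv, ← add_assoc]
  exact add_le_add (add_le_add le_rfl a) b

lemma thetaShift_zero_upper {c : ℝ} (hc : 0 < c) :
    thetaShift c 0 ≤ 1 + 2 * Real.exp (-c) / (1 - Real.exp (-3 * c)) := by
  have hρ : Real.exp (-3 * c) < 1 := by rw [Real.exp_lt_one_iff]; linarith
  have bound : ∀ n : ℕ, Real.exp (-c * ((n : ℝ) + 1) ^ 2) ≤
      Real.exp (-c) * Real.exp (-3 * c) ^ n := fun n => by
    rw [← Real.exp_nat_mul, ← Real.exp_add]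
    apply Real.exp_le_exp.2
    have : (n : ℝ) ≤ (n : ℝ) ^ 2 := by exact_mod_cast Nat.le_self_pow (by norm_num) n
    nlinarith
  have h1 : ∀ n : ℕ, Real.exp (-c * ((((n + 1 : ℕ) : ℤ) : ℝ) + 0) ^ 2) ≤
      Real.exp (-c) * Real.exp (-3 * c) ^ n := fun n => by
    have e : ((((n + 1 : ℕ) : ℤ) : ℝ) + 0) ^ 2 = ((n : ℝ) + 1) ^ 2 := by push_cast; ring
    rw [e]; exact bound n
  have h2 : ∀ n : ℕ, Real.exp (-c * (((-((n : ℤ) + 1) : ℤ) : ℝ) + 0) ^ 2) ≤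
      Real.exp (-c) * Real.exp (-3 * c) ^ n := fun n => by
    have e : (((-((n : ℤ) + 1) : ℤ) : ℝ) + 0) ^ 2 = ((n : ℝ) + 1) ^ 2 := by push_cast; ring
    rw [e]; exact bound n
  have h := tsum_int_le_center_geom (Real.exp_pos (-3 * c)).le hρ (summable_gauss_shift hc 0) h1 h2
  have e0 : Real.exp (-c * (((0 : ℤ) : ℝ) + 0) ^ 2) = 1 := by simp
  rw [e0, ← two_mul] at h
  exact h

lemma thetaShift_half_upper {c : ℝ} (hc : 0 < c) :
    thetaShift c (1 / 2) ≤ 2 * Real.exp (-c / 4) / (1 - Real.exp (-2 * c)) := by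
  have hρ : Real.exp (-2 * c) < 1 := by rw [Real.exp_lt_one_iff]; linarith
  have bound : ∀ n : ℕ, Real.exp (-c * ((n : ℝ) + 1 / 2) ^ 2) ≤
      Real.exp (-c / 4) * Real.exp (-2 * c) ^ n := fun n => by
    rw [← Real.exp_nat_mul, ← Real.exp_add]
    apply Real.exp_le_exp.2
    have : (n : ℝ) ≤ (n : ℝ) ^ 2 := by exact_mod_cast Nat.le_self_pow (by norm_num) n
    nlinarith
  have h1 : ∀ n : ℕ, Real.exp (-c * (((n : ℤ) : ℝ) + 1 / 2) ^ 2) ≤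
      Real.exp (-c / 4) * Real.exp (-2 * c) ^ n := fun n => by
    rw [Int.cast_natCast]; exact bound n
  have h2 : ∀ n : ℕ, Real.exp (-c * (((-((n : ℤ) + 1) : ℤ) : ℝ) + 1 / 2) ^ 2) ≤
      Real.exp (-c / 4) * Real.exp (-2 * c) ^ n := fun n => by
    have e : (((-((n : ℤ) + 1) : ℤ) : ℝ) + 1 / 2) ^ 2 = ((n : ℝ) + 1 / 2) ^ 2 := by
      push_cast; ring
    rw [e]; exact bound n
  have h := tsum_int_le_geom (Real.exp_pos (-2 * c)).le hρ (summable_gauss_shift hc _) h1 h2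
  rw [← two_mul] at h
  exact h

/-- The Gaussian tail `∑_{|n| ≥ 2} n² exp (-b n²)`, as a sum over all of `ℤ`. -/
def tailTerm (b : ℝ) (n : ℤ) : ℝ := if 2 ≤ |n| then (n : ℝ) ^ 2 * Real.exp (-b * (n : ℝ) ^ 2) else 0

lemma tailTerm_nonneg (b : ℝ) (n : ℤ) : 0 ≤ tailTerm b n := by
  unfold tailTerm; split_ifs <;> positivity

lemma summable_sq_gauss {b : ℝ} (hb : 0 < b) :
    Summable fun n : ℤ => (n : ℝ) ^ 2 * Real.exp (-b * (n : ℝ) ^ 2) := by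
  refine Summable.of_nonneg_of_le (fun _ => by positivity) (fun n => ?_)
    ((summable_gauss (half_pos hb)).mul_left (2 / b))
  have h := Real.add_one_le_exp (b / 2 * (n : ℝ) ^ 2)
  have e : Real.exp (-b * (n : ℝ) ^ 2) =
    Real.exp (-(b / 2) * (n : ℝ) ^ 2) * Real.exp (-(b / 2 * (n : ℝ) ^ 2)) := by
    rw [← Real.exp_add]; ring_nf
  have e' : Real.exp (b / 2 * (n : ℝ) ^ 2) * Real.exp (-(b / 2 * (n : ℝ) ^ 2)) = 1 := by
    rw [← Real.exp_add]; simp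
  rw [e]
  have : (n : ℝ) ^ 2 * Real.exp (-(b / 2 * (n : ℝ) ^ 2)) ≤ 2 / b := by
    rw [le_div_iff₀ hb]
    nlinarith [Real.exp_pos (-(b / 2 * (n : ℝ) ^ 2))]
  nlinarith [Real.exp_pos (-(b / 2) * (n : ℝ) ^ 2)]

lemma summable_tailTerm {b : ℝ} (hb : 0 < b) : Summable (tailTerm b) := by
  refine Summable.of_nonneg_of_le (tailTerm_nonneg b) (fun n => ?_) (summable_sq_gauss hb)
  unfold tailTerm; split_ifs
  · exact le_rfl
  · positivity

lemma exp_neg_nine_lt : Real.exp (-9) < 0.001 := by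
  have h : Real.exp (-9) = (Real.exp (-1)) ^ 9 := by rw [← Real.exp_nat_mul]; norm_num
  rw [h]
  have := Real.exp_neg_one_lt_d9
  calc Real.exp (-1) ^ 9 ≤ (0.3678794413 : ℝ) ^ 9 := by gcongr; exact this.le.trans (by norm_num)
    _ < 0.001 := by norm_num

lemma tsum_tailTerm_le {b : ℝ} (hb : 1.8 ≤ b) :
    ∑' n, tailTerm b n ≤ 8.1 * Real.exp (-4 * b) := by
  -- for `k = |n| - 2 ≥ 0`: `n² ≤ 4 (9/4)ᵏ` and `n² ≥ 4 + 5 k`, so the ratio is `(9/4) exp (-5 b)`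
  have hb0 : 0 < b := by linarith
  have term : ∀ k : ℕ, ((k : ℝ) + 2) ^ 2 * Real.exp (-b * ((k : ℝ) + 2) ^ 2) ≤
      4 * Real.exp (-4 * b) * 0.01 ^ k := fun k => by
    have h1 : ((k : ℝ) + 2) ^ 2 ≤ 4 * (9 / 4) ^ k := by
      have hb := one_add_mul_le_pow (show (-2 : ℝ) ≤ 1 / 2 by norm_num) k
      have : ((k : ℝ) + 2) ^ 2 = 4 * (1 + k * (1 / 2)) ^ 2 := by ring
      rw [this, show (9 / 4 : ℝ) = (1 + 1 / 2) ^ 2 by norm_num, ← pow_mul, mul_comm 2 k, pow_mul]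
      gcongr
    have h2 : Real.exp (-b * ((k : ℝ) + 2) ^ 2) ≤ Real.exp (-4 * b) * Real.exp (-9) ^ k := by
      rw [← Real.exp_nat_mul, ← Real.exp_add]
      apply Real.exp_le_exp.2
      have : (k : ℝ) ≤ (k : ℝ) ^ 2 := by exact_mod_cast Nat.le_self_pow (by norm_num) k
      nlinarith [Nat.cast_nonneg (α := ℝ) k]
    have h3 : (9 / 4 : ℝ) ^ k * Real.exp (-9) ^ k ≤ 0.01 ^ k := by
      rw [← mul_pow]
      gcongr
      linarith [exp_neg_nine_lt]
    calc ((k : ℝ) + 2) ^ 2 * Real.exp (-b * ((k : ℝ) + 2) ^ 2)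
        ≤ (4 * (9 / 4) ^ k) * (Real.exp (-4 * b) * Real.exp (-9) ^ k) := by gcongr
      _ = 4 * Real.exp (-4 * b) * ((9 / 4 : ℝ) ^ k * Real.exp (-9) ^ k) := by ring
      _ ≤ _ := by gcongr
  have hs := summable_tailTerm hb0
  have i1 : Function.Injective (fun n : ℕ => (n : ℤ)) := Nat.cast_injective
  have i2 : Function.Injective (fun n : ℕ => (-((n : ℤ) + 1))) := fun a b h => by
    simpa using h
  have s1 : Summable fun n : ℕ => tailTerm b n := hs.comp_injective i1
  have s2 : Summable fun n : ℕ => tailTerm b (-(n + 1)) := hs.comp_injective i2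
  rw [tsum_of_nat_of_neg_add_one s1 s2, s1.tsum_eq_zero_add, s2.tsum_eq_zero_add]
  have s1' := (summable_nat_add_iff 1).2 s1
  rw [s1'.tsum_eq_zero_add]
  have s1'' := (summable_nat_add_iff 1).2 s1'
  have s2' := (summable_nat_add_iff 1).2 s2
  have g := (hasSum_geometric_of_lt_one (r := (0.01 : ℝ)) (by norm_num) (by norm_num)).mul_left
    (4 * Real.exp (-4 * b))
  have a1 := hasSum_le (fun k => by
    have : (2 : ℤ) ≤ |(((k + 1 + 1 : ℕ)) : ℤ)| := by
      rw [abs_of_nonneg (by positivity)]; push_cast; omega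
    rw [tailTerm, if_pos this]
    have e : ((((k + 1 + 1 : ℕ) : ℤ)) : ℝ) ^ 2 = ((k : ℝ) + 2) ^ 2 := by push_cast; ring
    rw [e]
    exact term k) s1''.hasSum g
  have a2 := hasSum_le (fun k => by
    have : (2 : ℤ) ≤ |-((((k + 1 : ℕ)) : ℤ) + 1)| := by
      rw [abs_neg, abs_of_nonneg (by positivity)]; push_cast; omega
    rw [tailTerm, if_pos this]
    have e : ((-((((k + 1 : ℕ)) : ℤ) + 1) : ℤ) : ℝ) ^ 2 = ((k : ℝ) + 2) ^ 2 := by push_cast; ring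
    rw [e]
    exact term k) s2'.hasSum g
  have z0 : tailTerm b ((0 : ℕ) : ℤ) = 0 := by simp [tailTerm]
  have z1 : tailTerm b ((0 + 1 : ℕ) : ℤ) = 0 := by simp [tailTerm]
  have z2 : tailTerm b (-(((0 : ℕ) : ℤ) + 1)) = 0 := by simp [tailTerm]
  rw [z0, z1, z2]
  have := Real.exp_pos (-4 * b)
  have e : (1 - 0.01 : ℝ)⁻¹ = 100 / 99 := by norm_num
  rw [e] at a1 a2
  linarith

/-! ### Planar theta functions and sliding the rows -/

/-- The quadratic form `(m + n x)² s + n² / s` of determinant one, at `z = (n, m)`. It describes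
the lattice generated by `1` and `x + i / s`, rescaled to area one. -/
def latForm (x s : ℝ) (z : ℤ × ℤ) : ℝ := ((z.2 : ℝ) + z.1 * x) ^ 2 * s + (z.1 : ℝ) ^ 2 / s

/-- The two-dimensional theta function of the form `latForm x s`. -/
def latTheta (p x s : ℝ) : ℝ := ∑' z : ℤ × ℤ, Real.exp (-p * latForm x s z)

/-- The form is definite, hence comparable with the standard one. -/
lemma exists_latForm_ge (x : ℝ) {s : ℝ} (hs : 0 < s) :
    ∃ κ : ℝ, 0 < κ ∧ ∀ z : ℤ × ℤ, κ * ((z.1 : ℝ) ^ 2 + (z.2 : ℝ) ^ 2) ≤ latForm x s z := by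
  have hC : 0 < 2 / s + (2 * x ^ 2 + 1) * s := by positivity
  refine ⟨(2 / s + (2 * x ^ 2 + 1) * s)⁻¹, by positivity, fun z => ?_⟩
  rw [inv_mul_le_iff₀ hC]
  unfold latForm
  generalize ((z.2 : ℤ) : ℝ) = m
  generalize ((z.1 : ℤ) : ℝ) = n
  have e : (2 / s + (2 * x ^ 2 + 1) * s) * ((m + n * x) ^ 2 * s + n ^ 2 / s) =
      2 * (m + n * x) ^ 2 + (2 * x ^ 2 + 1) * n ^ 2 +
        (2 * n ^ 2 / s ^ 2 + (2 * x ^ 2 + 1) * (m + n * x) ^ 2 * s ^ 2) := by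
    field_simp
    ring
  rw [e]
  have h1 : 0 ≤ 2 * n ^ 2 / s ^ 2 + (2 * x ^ 2 + 1) * (m + n * x) ^ 2 * s ^ 2 := by positivity
  nlinarith [sq_nonneg (m + 2 * n * x)]

lemma latForm_nonneg (x : ℝ) {s : ℝ} (hs : 0 < s) (z : ℤ × ℤ) : 0 ≤ latForm x s z := by
  unfold latForm; positivity

lemma summable_gauss_prod {c : ℝ} (hc : 0 < c) :
    Summable fun z : ℤ × ℤ => Real.exp (-c * ((z.1 : ℝ) ^ 2 + (z.2 : ℝ) ^ 2)) := by
  have := (summable_gauss hc).mul_of_nonneg (summable_gauss hc)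
    (fun _ => (Real.exp_pos _).le) (fun _ => (Real.exp_pos _).le)
  refine this.congr fun z => ?_
  rw [← Real.exp_add]; ring_nf

lemma summable_latTheta {p s : ℝ} (x : ℝ) (hp : 0 < p) (hs : 0 < s) :
    Summable fun z : ℤ × ℤ => Real.exp (-p * latForm x s z) := by
  obtain ⟨κ, hκ, h⟩ := exists_latForm_ge x hs
  refine Summable.of_nonneg_of_le (fun _ => (Real.exp_pos _).le) (fun z => ?_)
    (summable_gauss_prod (mul_pos hp hκ))
  apply Real.exp_le_exp.2
  nlinarith [mul_le_mul_of_nonneg_left (h z) hp.le]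

/-- Summation over the rows of the lattice. -/
lemma hasSum_latTheta_rows {p s : ℝ} (x : ℝ) (hp : 0 < p) (hs : 0 < s) :
    HasSum (fun n : ℤ => Real.exp (-(p / s) * (n : ℝ) ^ 2) * thetaShift (p * s) (n * x))
      (latTheta p x s) := by
  refine (summable_latTheta x hp hs).hasSum.prod_fiberwise fun n => ?_
  have h := (hasSum_thetaShift (mul_pos hp hs) (n * x)).mul_left
    (Real.exp (-(p / s) * (n : ℝ) ^ 2))
  refine (congrArg (HasSum · _) (funext fun m => ?_)).mpr h
  rw [← Real.exp_add]
  congr 1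
  simp only [latForm]
  ring

lemma thetaShift_add_int (c u : ℝ) (k : ℤ) : thetaShift c (u + k) = thetaShift c u := by
  unfold thetaShift
  rw [← (Equiv.addRight (-k)).tsum_eq]
  refine tsum_congr fun m => ?_
  simp only [Equiv.coe_addRight]
  push_cast
  ring_nf

lemma thetaShift_neg (c u : ℝ) : thetaShift c (-u) = thetaShift c u := by
  have := thetaShift_symm (c := c) (u := 0) (k := 0) (by simp) u
  simpa using this.symm

lemma exp_neg_504_le : Real.exp (-5.04) ≤ 0.0065 := by
  have h : Real.exp (-5.04) = (Real.exp (-1)) ^ 5 * Real.exp (-0.04) := by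
    rw [← Real.exp_nat_mul, ← Real.exp_add]; norm_num
  have h1 : Real.exp (-1) ^ 5 ≤ (0.3678794413 : ℝ) ^ 5 := by
    gcongr; exact Real.exp_neg_one_lt_d9.le.trans (by norm_num)
  have h2 : Real.exp (-0.04) * 1.04 ≤ 1 := by
    have := Real.add_one_le_exp (0.04 : ℝ)
    have e : Real.exp (-0.04) * Real.exp 0.04 = 1 := by rw [← Real.exp_add]; norm_num
    nlinarith [Real.exp_pos (-0.04 : ℝ)]
  rw [h]
  have h3 : Real.exp (-0.04) ≤ 1 / 1.04 := by rw [le_div_iff₀ (by norm_num)]; exact h2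
  calc _ ≤ (0.3678794413 : ℝ) ^ 5 * (1 / 1.04) := by gcongr
    _ ≤ _ := by norm_num

lemma exp_neg_252_le : Real.exp (-2.52) ≤ 0.081 := by
  have h : Real.exp (-5.04) = Real.exp (-2.52) ^ 2 := by
    rw [← Real.exp_nat_mul]; norm_num
  have := exp_neg_504_le
  rw [h] at this
  nlinarith [Real.exp_pos (-2.52 : ℝ)]

lemma thetaShift_half_int_le {c : ℝ} (hc : 2.52 ≤ c) (n : ℤ) : thetaShift c (n * (1 / 2)) ≤ 1.19 := by
  have hc0 : 0 < c := by linarith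
  have a0 : Real.exp (-c) ≤ 0.081 := (Real.exp_le_exp.2 (by linarith)).trans exp_neg_252_le
  have a1 : Real.exp (-3 * c) ≤ 0.081 :=
    (Real.exp_le_exp.2 (by linarith)).trans exp_neg_252_le
  have a2 : Real.exp (-2 * c) ≤ 0.0065 :=
    (Real.exp_le_exp.2 (by linarith)).trans exp_neg_504_le
  have a3 : Real.exp (-c / 4) ≤ 0.54 := by
    have e : Real.exp (-c / 4) ^ 4 = Real.exp (-c) := by rw [← Real.exp_nat_mul]; norm_num; ring
    have : Real.exp (-c / 4) ^ 4 ≤ 0.54 ^ 4 := by rw [e]; exact a0.trans (by norm_num)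
    exact le_of_pow_le_pow_left₀ (by norm_num) (by norm_num) this
  rcases Int.even_or_odd' n with ⟨k, rfl | rfl⟩
  · have e : ((2 * k : ℤ) : ℝ) * (1 / 2) = 0 + k := by push_cast; ring
    rw [e, thetaShift_add_int]
    refine (thetaShift_zero_upper hc0).trans ?_
    have : 2 * Real.exp (-c) / (1 - Real.exp (-3 * c)) ≤ 0.19 := by
      rw [div_le_iff₀ (by linarith)]; linarith
    linarith
  · have e : ((2 * k + 1 : ℤ) : ℝ) * (1 / 2) = 1 / 2 + k := by push_cast; ring
    rw [e, thetaShift_add_int]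
    refine (thetaShift_half_upper hc0).trans ?_
    rw [div_le_iff₀ (by linarith)]; linarith

lemma hasSum_pm_one (v : ℝ) :
    HasSum (fun n : ℤ => if n = 1 ∨ n = -1 then v else 0) (2 * v) := by
  have : HasSum (fun n : ℤ => if n = 1 ∨ n = -1 then v else 0)
      (∑ n ∈ ({1, -1} : Finset ℤ), if n = 1 ∨ n = -1 then v else 0) :=
    hasSum_sum_of_ne_finset_zero fun n hn => by
      rw [if_neg]; simpa using hn
  rw [Finset.sum_insert (by decide), Finset.sum_singleton] at this
  simpa [two_mul] using this

/-- Sliding the rows to the rhombic position `x = 1/2` decreases the theta function. The rows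
`n = ±1` gain a multiple of `(1/2 - x)²`, and every other row loses at most a much smaller one. -/
lemma latTheta_half_lt {p x s : ℝ} (hp : 0 < p) (hs : 0 < s) (hs1 : s ^ 2 ≤ 4 / 3)
    (hc : 2.52 ≤ p * s) (hx0 : 0 ≤ x) (hx1 : x < 1 / 2) :
    latTheta p (1 / 2) s < latTheta p x s := by
  set c := p * s with hcdef
  set b := p / s with hbdef
  have hc0 : 0 < c := by linarith
  have hb0 : 0 < b := div_pos hp hs
  have hbc : 3 / 4 * c ≤ b := by
    rw [hbdef, le_div_iff₀ hs, hcdef]; nlinarith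
  set δ := 1 / 2 - x with hδ
  have hδ0 : 0 < δ := by linarith
  have hδ1 : δ ≤ 1 / 2 := by linarith
  have hH := hasSum_latTheta_rows (1 / 2) hp hs
  have hX := hasSum_latTheta_rows x hp hs
  rw [← hcdef, ← hbdef] at hH hX
  have hpm := hasSum_pm_one (0.05 * (Real.exp (-b) * thetaShift c (1 / 2)))
  have htail := (summable_tailTerm hb0).hasSum.mul_left (1.19 * c)
  have hLB := hH.add ((hpm.sub htail).mul_left (δ ^ 2))
  have hx : x = 1 / 2 - δ := by rw [hδ]; ring
  have growth : thetaShift c (1 / 2) * (1 + 0.05 * δ ^ 2) ≤ thetaShift c x := by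
    rw [hx, ← thetaShift_symm (c := c) (u := 1 / 2) (k := 1) (by norm_num) δ]
    exact thetaShift_half_growth hc hδ0.le hδ1
  have hle := hasSum_le (fun n => by
    by_cases h1 : n = 1 ∨ n = -1
    · have ht : tailTerm b n = 0 := by
        rw [tailTerm, if_neg]; rcases h1 with rfl | rfl <;> decide
      have hn2 : (n : ℝ) ^ 2 = 1 := by rcases h1 with rfl | rfl <;> norm_num
      have e1 : thetaShift c (n * (1 / 2)) = thetaShift c (1 / 2) := by
        rcases h1 with rfl | rfl
        · norm_num
        · rw [← thetaShift_neg c (1 / 2)]; norm_num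
      have e2 : thetaShift c (n * x) = thetaShift c x := by
        rcases h1 with rfl | rfl
        · norm_num
        · rw [← thetaShift_neg c x]; norm_num
      rw [if_pos h1, ht, hn2, e1, e2, mul_one]
      nlinarith [mul_le_mul_of_nonneg_left growth (Real.exp_pos (-b)).le]
    · rw [if_neg h1]
      by_cases h0 : n = 0
      · subst h0
        simp [tailTerm]
      · have h2 : 2 ≤ |n| := by
          by_contra! hlt
          have := abs_lt.1 hlt
          omega
        rw [tailTerm, if_pos h2]
        have low := thetaShift_lower (c := c) (u := n * (1 / 2)) hc0 (k := n) (by ring) (-(n * δ))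
        have e : (n : ℝ) * (1 / 2) + -(n * δ) = n * x := by rw [hx]; ring
        rw [e] at low
        have up := thetaShift_half_int_le hc n
        have hE := Real.exp_pos (-b * (n : ℝ) ^ 2)
        have : thetaShift c (n * (1 / 2)) - 1.19 * c * (n : ℝ) ^ 2 * δ ^ 2 ≤ thetaShift c (n * x) := by
          have h3 : 0 ≤ c * (n : ℝ) ^ 2 * δ ^ 2 := by positivity
          nlinarith
        nlinarith [mul_le_mul_of_nonneg_left this hE.le]) hLB hX
  refine lt_of_lt_of_le ?_ hle
  have tb := tsum_tailTerm_le (b := b) (by linarith)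
  have hl := thetaShift_half_lower hc0
  have k1 : Real.exp (-4 * b) ≤ Real.exp (-b) * (Real.exp (-c / 4) * Real.exp (-2 * c)) := by
    rw [← Real.exp_add, ← Real.exp_add]; apply Real.exp_le_exp.2; linarith
  have k2 : c * Real.exp (-2 * c) ≤ 2.52 * Real.exp (-5.04) := by
    have e : Real.exp (-5.04) = Real.exp (-2 * c) * Real.exp (2 * c - 5.04) := by
      rw [← Real.exp_add]; ring_nf
    rw [e]
    nlinarith [Real.add_one_le_exp (2 * c - 5.04), Real.exp_pos (-2 * c)]
  have k3 := exp_neg_504_le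
  have hB := Real.exp_pos (-b)
  have hC := Real.exp_pos (-c / 4)
  have k4 : c * Real.exp (-4 * b) ≤ Real.exp (-b) * Real.exp (-c / 4) * 0.01638 := by
    calc c * Real.exp (-4 * b) ≤ c * (Real.exp (-b) * (Real.exp (-c / 4) * Real.exp (-2 * c))) := by
          gcongr
      _ = Real.exp (-b) * Real.exp (-c / 4) * (c * Real.exp (-2 * c)) := by ring
      _ ≤ _ := by
        refine mul_le_mul_of_nonneg_left ?_ (by positivity)
        linarith
  have k5 : 1.19 * c * ∑' n, tailTerm b n ≤ 1.19 * 8.1 * (c * Real.exp (-4 * b)) := by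
    nlinarith [mul_le_mul_of_nonneg_left tb hc0.le]
  have k6 := mul_le_mul_of_nonneg_left hl hB.le
  have k7 : 0 < Real.exp (-b) * Real.exp (-c / 4) := by positivity
  have : 0 < 2 * (0.05 * (Real.exp (-b) * thetaShift c (1 / 2))) - 1.19 * c * ∑' n, tailTerm b n := by
    nlinarith
  have := mul_pos (pow_pos hδ0 2) this
  linarith

/-! ### The triangular lattice at low temperature -/

/-- The parameter `s = 2 / √3` of the triangular lattice, whose other parameter is `x = 1/2`. -/
def hexS : ℝ := 2 / Real.sqrt 3

lemma hexS_pos : 0 < hexS := by unfold hexS; positivity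

lemma hexS_sq : hexS ^ 2 = 4 / 3 := by
  unfold hexS; rw [div_pow, Real.sq_sqrt (by norm_num)]; norm_num

lemma hexS_gt : 1.1547 < hexS := by
  nlinarith [hexS_sq, hexS_pos]

lemma div_hexS (t : ℝ) : t / hexS = 3 / 4 * (t * hexS) := by
  rw [div_eq_iff hexS_pos.ne']; linear_combination -(3 / 4) * t * hexS_sq

lemma le_mul_hexS {p : ℝ} (hp : π ≤ p) : 3.627 ≤ p * hexS := by
  have := Real.pi_gt_d4
  have := hexS_gt
  nlinarith

/-- On the triangular lattice the form is `s (m² + m n + n²)`. -/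
lemma latForm_hex (z : ℤ × ℤ) : latForm (1 / 2) hexS z =
    hexS * ((z.2 : ℝ) ^ 2 + z.2 * z.1 + (z.1 : ℝ) ^ 2) := by
  rw [latForm, div_hexS]; ring

lemma exp_neg_3627_le {q : ℝ} (hq : 3.627 ≤ q) : Real.exp (-q) ≤ 0.028 := by
  have h1 : Real.exp (-q) ≤ Real.exp (-2.52) * Real.exp (-1.107) := by
    rw [← Real.exp_add]; apply Real.exp_le_exp.2; linarith
  have e : Real.exp (-1.107) * Real.exp 1.107 = 1 := by rw [← Real.exp_add]; norm_num
  have h2 := Real.quadratic_le_exp_of_nonneg (x := 1.107) (by norm_num)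
  have h3 := exp_neg_252_le
  have h4 : Real.exp (-1.107) ≤ 1 / 2.7 := by
    rw [le_div_iff₀ (by norm_num)]; nlinarith [Real.exp_pos (-1.107 : ℝ)]
  have h5 : Real.exp (-2.52) * Real.exp (-1.107) ≤ 0.081 * (1 / 2.7) := by gcongr
  -- `0.081 / 2.7 = 0.03`; the exact value of the exponential at `1` sharpens it
  have e1 : Real.exp 1.107 = Real.exp 1 * Real.exp 0.107 := by rw [← Real.exp_add]; norm_num
  have h6 := Real.exp_one_gt_d9
  have h7 := Real.add_one_le_exp (0.107 : ℝ)
  have h8 : 3 ≤ Real.exp 1.107 := by rw [e1]; nlinarith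
  nlinarith [Real.exp_pos (-1.107 : ℝ), Real.exp_pos (-2.52 : ℝ)]

lemma hex_row_one {q : ℝ} (hq : 3.627 ≤ q) :
    Real.exp (-(3 / 4 * q)) * thetaShift q (1 / 2) ≤ 2.002 * Real.exp (-q) := by
  have hr := exp_neg_3627_le hq
  have hr0 := Real.exp_pos (-q)
  have e2 : Real.exp (-2 * q) = Real.exp (-q) ^ 2 := by rw [← Real.exp_nat_mul]; ring_nf
  have e1 : Real.exp (-(3 / 4 * q)) * Real.exp (-q / 4) = Real.exp (-q) := by
    rw [← Real.exp_add]; ring_nf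
  have h := thetaShift_half_upper (c := q) (by linarith)
  have hd : 0 < 1 - Real.exp (-2 * q) := by rw [e2]; nlinarith
  refine (mul_le_mul_of_nonneg_left h (Real.exp_pos _).le).trans ?_
  rw [mul_div_assoc', div_le_iff₀ hd, mul_left_comm, e1, e2]
  nlinarith

lemma hex_row_zero {q : ℝ} (hq : 3.627 ≤ q) : thetaShift q 0 ≤ 1 + 2.002 * Real.exp (-q) := by
  have hr := exp_neg_3627_le hq
  have hr0 := Real.exp_pos (-q)
  have e3 : Real.exp (-3 * q) = Real.exp (-q) ^ 3 := by rw [← Real.exp_nat_mul]; ring_nf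
  have h := thetaShift_zero_upper (c := q) (by linarith)
  have h2 : Real.exp (-q) ^ 2 ≤ 0.028 ^ 2 := by gcongr
  have h3 : Real.exp (-q) ^ 3 ≤ 0.028 ^ 3 := by gcongr
  have hd : 0 < 1 - Real.exp (-3 * q) := by rw [e3]; norm_num at h3 ⊢; linarith
  refine h.trans (add_le_add le_rfl ?_)
  rw [div_le_iff₀ hd, e3]
  nlinarith

lemma hex_tail {q : ℝ} (hq : 3.627 ≤ q) :
    1.19 * ∑' n, tailTerm (3 / 4 * q) n ≤ 0.008 * Real.exp (-q) := by
  have hr := exp_neg_3627_le hq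
  have hr0 := Real.exp_pos (-q)
  have h := tsum_tailTerm_le (b := 3 / 4 * q) (by linarith)
  have e3 : Real.exp (-4 * (3 / 4 * q)) = Real.exp (-q) ^ 3 := by
    rw [← Real.exp_nat_mul]; ring_nf
  rw [e3] at h
  have h2 : Real.exp (-q) ^ 2 ≤ 0.028 ^ 2 := by gcongr
  nlinarith

lemma one_le_sq_of_two_le_abs {n : ℤ} (h : 2 ≤ |n|) : (1 : ℝ) ≤ (n : ℝ) ^ 2 := by
  have : (1 : ℤ) ≤ n ^ 2 := by rw [← sq_abs]; nlinarith
  exact_mod_cast this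

lemma eq_zero_or_pm_one_or (n : ℤ) : n = 0 ∨ (n = 1 ∨ n = -1) ∨ 2 ≤ |n| := by
  by_cases h2 : 2 ≤ |n|
  · exact Or.inr (Or.inr h2)
  · have := abs_lt.1 (not_le.1 h2); omega

lemma thetaShift_pm_half {n : ℤ} (c : ℝ) (h : n = 1 ∨ n = -1) :
    thetaShift c (n * (1 / 2)) = thetaShift c (1 / 2) := by
  rcases h with rfl | rfl
  · norm_num
  · rw [← thetaShift_neg c (1 / 2)]; norm_num

lemma tailTerm_of_pm {n : ℤ} (b : ℝ) (h : n = 1 ∨ n = -1) : tailTerm b n = 0 := by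
  rw [tailTerm, if_neg]; rcases h with rfl | rfl <;> decide

/-- The six shortest vectors dominate the theta function of the triangular lattice. -/
lemma latTheta_hex_le {p : ℝ} (hp : π ≤ p) :
    latTheta p (1 / 2) hexS ≤ 1 + 6.015 * Real.exp (-(p * hexS)) := by
  have hq := le_mul_hexS hp
  have hp0 : 0 < p := Real.pi_pos.trans_le hp
  have hT := hasSum_latTheta_rows (1 / 2) hp0 hexS_pos
  rw [div_hexS] at hT
  set q := p * hexS with hqdef
  have hU := ((hasSum_ite_eq (0 : ℤ) (thetaShift q 0)).add
    (hasSum_pm_one (Real.exp (-(3 / 4 * q)) * thetaShift q (1 / 2)))).add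
    ((summable_tailTerm (b := 3 / 4 * q) (by linarith)).hasSum.mul_left 1.19)
  have h := hasSum_le (fun n => by
    rcases eq_zero_or_pm_one_or n with h0 | h1 | h2
    · subst h0; simp [tailTerm]
    · have hn2 : (n : ℝ) ^ 2 = 1 := by rcases h1 with rfl | rfl <;> norm_num
      have hn0 : n ≠ 0 := by rcases h1 with rfl | rfl <;> norm_num
      rw [tailTerm_of_pm _ h1, if_pos h1, thetaShift_pm_half q h1, hn2, if_neg hn0]
      simp
    · have hn1 : ¬ (n = 1 ∨ n = -1) := by rintro (rfl | rfl) <;> norm_num at h2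
      have hn0 : n ≠ 0 := by rintro rfl; norm_num at h2
      rw [tailTerm, if_pos h2, if_neg hn1, if_neg hn0]
      have a := thetaShift_half_int_le (c := q) (by linarith) n
      have b := one_le_sq_of_two_le_abs h2
      have hE := Real.exp_pos (-(3 / 4 * q) * (n : ℝ) ^ 2)
      nlinarith [mul_le_mul_of_nonneg_left a hE.le]) hT hU
  have := hex_row_one hq
  have := hex_row_zero hq
  have := hex_tail hq
  linarith [Real.exp_pos (-q)]

lemma hex_form_ge (n m : ℝ) : 1 / 2 * (n ^ 2 + m ^ 2) ≤ m ^ 2 + m * n + n ^ 2 := by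
  nlinarith [sq_nonneg (m + n)]

lemma summable_sq_latTheta_hex {p : ℝ} (hp : 0 < p) :
    Summable (fun z : ℤ × ℤ => (z.1 : ℝ) ^ 2 * Real.exp (-p * latForm (1 / 2) hexS z)) ∧
    Summable (fun z : ℤ × ℤ => (z.2 : ℝ) ^ 2 * Real.exp (-p * latForm (1 / 2) hexS z)) := by
  have hq : 0 < p * hexS / 2 := half_pos (mul_pos hp hexS_pos)
  have bound : ∀ z : ℤ × ℤ, Real.exp (-p * latForm (1 / 2) hexS z) ≤
      Real.exp (-(p * hexS / 2) * (z.1 : ℝ) ^ 2) * Real.exp (-(p * hexS / 2) * (z.2 : ℝ) ^ 2) := by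
    intro z
    rw [← Real.exp_add, latForm_hex]
    apply Real.exp_le_exp.2
    have := mul_le_mul_of_nonneg_left (hex_form_ge z.1 z.2) (mul_pos hp hexS_pos).le
    linarith
  constructor
  · refine Summable.of_nonneg_of_le (fun _ => by positivity) (fun z => ?_)
      ((summable_sq_gauss hq).mul_of_nonneg (summable_gauss hq)
      (fun _ => by positivity) (fun _ => by positivity))
    rw [mul_assoc]
    exact mul_le_mul_of_nonneg_left (bound z) (sq_nonneg _)
  · refine Summable.of_nonneg_of_le (fun _ => by positivity) (fun z => ?_)
      ((summable_gauss hq).mul_of_nonneg (summable_sq_gauss hq)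
      (fun _ => by positivity) (fun _ => by positivity))
    rw [mul_left_comm]
    exact mul_le_mul_of_nonneg_left (bound z) (sq_nonneg _)

/-- The automorphism `(n, m) ↦ (-(n + m), m)` of the form `m² + m n + n²`. -/
def hexRefl : ℤ × ℤ ≃ ℤ × ℤ where
  toFun z := (-(z.1 + z.2), z.2)
  invFun z := (-(z.1 + z.2), z.2)
  left_inv z := by ext <;> simp
  right_inv z := by ext <;> simp

/-- Criticality of the triangular lattice: the sixfold symmetry makes the first-order variation of
its theta function in `s` vanish. -/
lemma hasSum_hex_critical {p : ℝ} (hp : 0 < p) :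
    HasSum (fun z : ℤ × ℤ => ((z.2 : ℝ) ^ 2 + z.2 * z.1 - (z.1 : ℝ) ^ 2 / 2) *
      Real.exp (-p * latForm (1 / 2) hexS z)) 0 := by
  obtain ⟨s1, s2⟩ := summable_sq_latTheta_hex hp
  set G : ℤ × ℤ → ℝ := fun z => Real.exp (-p * latForm (1 / 2) hexS z) with hG
  have gswap : ∀ z : ℤ × ℤ, G z.swap = G z := fun z => by
    simp only [hG, latForm_hex, Prod.fst_swap, Prod.snd_swap]; ring_nf
  have grefl : ∀ z : ℤ × ℤ, G (hexRefl z) = G z := fun z => by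
    simp only [hG, latForm_hex, hexRefl, Equiv.coe_fn_mk]; push_cast; ring_nf
  have h1 := s1.hasSum
  have h2 : HasSum (fun z : ℤ × ℤ => (z.2 : ℝ) ^ 2 * G z) (∑' z : ℤ × ℤ, (z.1 : ℝ) ^ 2 * G z) := by
    have := (Equiv.prodComm ℤ ℤ).hasSum_iff.2 h1
    refine (congrArg (HasSum · _) (funext fun z => ?_)).mpr this
    rw [← gswap z]; rfl
  set S := ∑' z : ℤ × ℤ, (z.1 : ℝ) ^ 2 * G z
  have h3 := hexRefl.hasSum_iff.2 h1
  have h4 := ((h3.sub h1).sub h2).mul_left (1 / 2)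
  have h5 := (h2.add h4).sub (h1.mul_left (1 / 2))
  have e0 : S + 1 / 2 * (S - S - S) - 1 / 2 * S = 0 := by ring
  rw [e0] at h5
  refine (congrArg (HasSum · _) (funext fun z => ?_)).mpr h5
  have : (((fun z : ℤ × ℤ => (z.1 : ℝ) ^ 2 * Real.exp (-p * latForm (1 / 2) hexS z)) ∘ ⇑hexRefl) z)
      = ((z.1 : ℝ) + z.2) ^ 2 * G z := by
    rw [Function.comp_apply, ← grefl z]
    simp only [hexRefl, Equiv.coe_fn_mk, hG]; push_cast; ring
  rw [this]
  simp only [hG]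
  ring

/-- The second moment of the triangular theta function in the direction transverse to the rows. -/
lemma hex_second_moment_le {p : ℝ} (hp : π ≤ p) :
    ∑' z : ℤ × ℤ, (z.1 : ℝ) ^ 2 * Real.exp (-p * latForm (1 / 2) hexS z) ≤
      4.5 * Real.exp (-(p * hexS)) := by
  have hq := le_mul_hexS hp
  have hp0 : 0 < p := Real.pi_pos.trans_le hp
  have hT : HasSum (fun n : ℤ => (n : ℝ) ^ 2 * (Real.exp (-(p / hexS) * (n : ℝ) ^ 2) *
      thetaShift (p * hexS) (n * (1 / 2))))
      (∑' z : ℤ × ℤ, (z.1 : ℝ) ^ 2 * Real.exp (-p * latForm (1 / 2) hexS z)) := by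
    refine (summable_sq_latTheta_hex hp0).1.hasSum.prod_fiberwise fun n => ?_
    have h := ((hasSum_thetaShift (mul_pos hp0 hexS_pos) (n * (1 / 2))).mul_left
      (Real.exp (-(p / hexS) * (n : ℝ) ^ 2))).mul_left ((n : ℝ) ^ 2)
    refine (congrArg (HasSum · _) (funext fun m => ?_)).mpr h
    rw [← Real.exp_add]
    congr 2
    simp only [latForm]
    ring
  rw [div_hexS] at hT
  set q := p * hexS with hqdef
  have hU := (hasSum_pm_one (Real.exp (-(3 / 4 * q)) * thetaShift q (1 / 2))).add
    ((summable_tailTerm (b := 3 / 4 * q) (by linarith)).hasSum.mul_left 1.19)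
  have h := hasSum_le (fun n => by
    rcases eq_zero_or_pm_one_or n with h0 | h1 | h2
    · subst h0; simp [tailTerm]
    · have hn2 : (n : ℝ) ^ 2 = 1 := by rcases h1 with rfl | rfl <;> norm_num
      rw [tailTerm_of_pm _ h1, if_pos h1, thetaShift_pm_half q h1, hn2]
      simp
    · have hn1 : ¬ (n = 1 ∨ n = -1) := by rintro (rfl | rfl) <;> norm_num at h2
      rw [tailTerm, if_pos h2, if_neg hn1]
      have a := thetaShift_half_int_le (c := q) (by linarith) n
      have hE : 0 ≤ (n : ℝ) ^ 2 * Real.exp (-(3 / 4 * q) * (n : ℝ) ^ 2) := by positivity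
      nlinarith [mul_le_mul_of_nonneg_left a hE]) hT hU
  have := hex_row_one hq
  have := hex_tail hq
  linarith [Real.exp_pos (-q)]

lemma hasSum_two_points (v : ℝ) :
    HasSum (fun z : ℤ × ℤ => if z = (0, 1) ∨ z = (0, -1) then v else 0) (2 * v) := by
  have : HasSum (fun z : ℤ × ℤ => if z = (0, 1) ∨ z = (0, -1) then v else 0)
      (∑ z ∈ ({(0, 1), (0, -1)} : Finset (ℤ × ℤ)), if z = (0, 1) ∨ z = (0, -1) then v else 0) :=
    hasSum_sum_of_ne_finset_zero fun z hz => by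
      rw [if_neg]; simpa using hz
  rw [Finset.sum_insert (by decide), Finset.sum_singleton] at this
  simpa [two_mul] using this

lemma cubic_le_exp {w : ℝ} (hw : 0 ≤ w) : 1 + w + w ^ 2 / 2 + w ^ 3 / 6 ≤ Real.exp w := by
  have := Real.sum_le_exp_of_nonneg hw 4
  simpa [Finset.sum_range_succ, Nat.factorial] using this

/-- Among the rhombic lattices `x = 1/2` with `s` not too small, the triangular one is strictly
optimal. Each exponential is bounded below by its tangent at `s = hexS`; the linear terms cancel by
`hasSum_hex_critical`, and the convexity gained on `(0, ±1)` beats the second-order loss. -/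
lemma latTheta_hex_lt_rhombic {p s : ℝ} (hp : π ≤ p) (hs : 0 < s) (hs1 : s < hexS)
    (hc : 2.52 ≤ p * s) : latTheta p (1 / 2) hexS < latTheta p (1 / 2) s := by
  have hp0 : 0 < p := Real.pi_pos.trans_le hp
  have hq := le_mul_hexS hp
  have hM := hex_second_moment_le hp
  set q := p * hexS with hqdef
  set c := p * s with hcdef
  set w := q - c with hw
  have hw0 : 0 < w := by rw [hw, hqdef, hcdef, ← mul_sub]; exact mul_pos hp0 (by linarith)
  have hT0 := (summable_latTheta (1 / 2) hp0 hexS_pos).hasSum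
  have hT := (summable_latTheta (1 / 2) hp0 hs).hasSum
  have hL := ((hT0.add ((hasSum_hex_critical hp0).mul_left w)).sub
    ((summable_sq_latTheta_hex hp0).1.hasSum.mul_left (3 * w ^ 2 / (4 * c)))).add
    (hasSum_two_points (Real.exp (-q) * (w ^ 2 / 2 + w ^ 3 / 6)))
  have h := hasSum_le (fun z => by
    have hE := Real.exp_pos (-p * latForm (1 / 2) hexS z)
    split_ifs with hz
    · have e0 : (z.1 : ℝ) = 0 := by rcases hz with rfl | rfl <;> simp
      have e1 : (z.2 : ℝ) ^ 2 = 1 := by rcases hz with rfl | rfl <;> simp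
      have f0 : -p * latForm (1 / 2) hexS z = -q := by
        rw [latForm_hex, e0, e1, hqdef]; ring
      have f1 : -p * latForm (1 / 2) s z = -q + w := by
        rw [latForm, e0, hw, hcdef]; linear_combination -p * s * e1
      rw [f0, f1, e0, e1, Real.exp_add]
      have := mul_le_mul_of_nonneg_left (cubic_le_exp hw0.le) (Real.exp_pos (-q)).le
      linarith
    · have f : -p * latForm (1 / 2) s z = -p * latForm (1 / 2) hexS z +
          (w * ((z.2 : ℝ) ^ 2 + z.2 * z.1 - (z.1 : ℝ) ^ 2 / 2) -
            3 * w ^ 2 / (4 * c) * (z.1 : ℝ) ^ 2) := by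
        rw [latForm_hex, latForm, hw, hqdef, hcdef]
        generalize ((z.1 : ℤ) : ℝ) = n
        generalize ((z.2 : ℤ) : ℝ) = m
        field_simp
        linear_combination (12 * n ^ 2) * hexS_sq
      have := mul_le_mul_of_nonneg_left (Real.add_one_le_exp
        (w * ((z.2 : ℝ) ^ 2 + z.2 * z.1 - (z.1 : ℝ) ^ 2 / 2) -
            3 * w ^ 2 / (4 * c) * (z.1 : ℝ) ^ 2)) hE.le
      rw [f, Real.exp_add]
      linarith) hL hT
  refine lt_of_lt_of_le ?_ h
  change latTheta p (1 / 2) hexS < latTheta p (1 / 2) hexS + w * 0 - _ + _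
  have hc0 : 0 < c := by linarith
  have hr0 := Real.exp_pos (-q)
  have k1 : 3 * w ^ 2 / (4 * c) *
      (∑' z : ℤ × ℤ, (z.1 : ℝ) ^ 2 * Real.exp (-p * latForm (1 / 2) hexS z)) ≤
      3 * w ^ 2 / (4 * c) * (4.5 * Real.exp (-q)) := mul_le_mul_of_nonneg_left hM (by positivity)
  have k2 : 3 * w ^ 2 / (4 * c) * (4.5 * Real.exp (-q)) <
      w ^ 2 * Real.exp (-q) * (1 + w / 3) := by
    have k3 : 3.375 < c * (1 + w / 3) := by rw [hw]; nlinarith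
    rw [div_mul_eq_mul_div, div_lt_iff₀ (by positivity)]
    have : 0 < w ^ 2 * Real.exp (-q) := by positivity
    nlinarith
  linarith

/-- For very elongated lattices the row through the origin alone exceeds the triangular value. -/
lemma latTheta_hex_lt_of_small {p x s : ℝ} (hp : π ≤ p) (hs : 0 < s) (hc : p * s < 2.52) :
    latTheta p (1 / 2) hexS < latTheta p x s := by
  have hp0 : 0 < p := Real.pi_pos.trans_le hp
  have h1 := latTheta_hex_le hp
  have hq := le_mul_hexS hp
  have hrow := le_hasSum (hasSum_latTheta_rows x hp0 hs) 0 (fun n _ =>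
    mul_nonneg (Real.exp_pos _).le (thetaShift_nonneg _ _))
  have e : Real.exp (-(p / s) * ((0 : ℤ) : ℝ) ^ 2) * thetaShift (p * s) (((0 : ℤ) : ℝ) * x) =
    thetaShift (p * s) 0 := by simp
  rw [e] at hrow
  have h2 := thetaShift_ge_zero_term (mul_pos hp0 hs)
  have h3 : 3.02 * Real.exp (-(p * hexS)) ≤ Real.exp (-(p * s)) := by
    have a : Real.exp (-(p * s)) = Real.exp (-(p * hexS)) * Real.exp (p * hexS - p * s) := by
      rw [← Real.exp_add]; ring_nf
    have b : Real.exp 1.107 ≤ Real.exp (p * hexS - p * s) := Real.exp_le_exp.2 (by linarith)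
    have e1 : Real.exp 1.107 = Real.exp 1 * Real.exp 0.107 := by rw [← Real.exp_add]; norm_num
    have h6 := Real.exp_one_gt_d9
    have h7 := Real.quadratic_le_exp_of_nonneg (x := (0.107 : ℝ)) (by norm_num)
    have h8 : 3.02 ≤ Real.exp 1.107 := by rw [e1]; nlinarith
    rw [a, mul_comm]
    exact mul_le_mul_of_nonneg_left (h8.trans b) (Real.exp_pos _).le
  linarith [Real.exp_pos (-(p * hexS))]

/-- The triangular lattice is the strict minimiser in the reduced region when `p ≥ π`. -/
lemma latTheta_hex_lt_of_pi_le {p x s : ℝ} (hp : π ≤ p) (hx0 : 0 ≤ x) (hx1 : x ≤ 1 / 2)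
    (hs : 0 < s) (hs1 : s ≤ hexS) (hne : ¬ (x = 1 / 2 ∧ s = hexS)) :
    latTheta p (1 / 2) hexS < latTheta p x s := by
  have hp0 : 0 < p := Real.pi_pos.trans_le hp
  rcases lt_or_ge (p * s) 2.52 with hc | hc
  · exact latTheta_hex_lt_of_small hp hs hc
  have hs2 : s ^ 2 ≤ 4 / 3 := by rw [← hexS_sq]; gcongr
  rcases hx1.lt_or_eq with hx | rfl
  · have h1 := latTheta_half_lt hp0 hs hs2 hc hx0 hx
    rcases hs1.lt_or_eq with h | rfl
    · exact (latTheta_hex_lt_rhombic hp hs h hc).trans h1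
    · exact h1
  · exact latTheta_hex_lt_rhombic hp hs (lt_of_le_of_ne hs1 fun h => hne ⟨rfl, h⟩) hc

/-! ### Poisson summation and the functional equation -/

/-- Poisson summation in one row. -/
lemma thetaShift_poisson {c : ℝ} (hc : 0 < c) (u : ℝ) :
    (thetaShift c u : ℂ) = (Real.sqrt (π / c) : ℝ) *
      ∑' k : ℤ, Complex.exp (-(π ^ 2 / c) * (k : ℂ) ^ 2 - 2 * π * Complex.I * u * k) := by
  have ha : 0 < π / c := div_pos Real.pi_pos hc
  have hπ : (π : ℂ) ≠ 0 := Complex.ofReal_ne_zero.2 Real.pi_ne_zero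
  have hc' : (c : ℂ) ≠ 0 := Complex.ofReal_ne_zero.2 hc.ne'
  have h := Complex.tsum_exp_neg_quadratic (a := ((π / c : ℝ) : ℂ))
    (by rwa [Complex.ofReal_re]) (-Complex.I * u)
  have hpow : ((π / c : ℝ) : ℂ) ^ (1 / 2 : ℂ) = (Real.sqrt (π / c) : ℝ) := by
    rw [Real.sqrt_eq_rpow, Complex.ofReal_cpow ha.le]; norm_num
  have hs : ((Real.sqrt (π / c) : ℝ) : ℂ) ≠ 0 :=
    Complex.ofReal_ne_zero.2 (Real.sqrt_pos.2 ha).ne'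
  rw [hpow] at h
  have e1 : (∑' n : ℤ, Complex.exp (-π / ((π / c : ℝ) : ℂ) * (n + Complex.I * (-Complex.I * u)) ^ 2))
      = (thetaShift c u : ℂ) := by
    rw [thetaShift, Complex.ofReal_tsum]
    refine tsum_congr fun n => ?_
    rw [Complex.ofReal_exp]
    congr 1
    have : (n : ℂ) + Complex.I * (-Complex.I * u) = n + u := by
      linear_combination -(u : ℂ) * Complex.I_sq
    rw [this]
    push_cast
    field_simp
  rw [e1] at h
  have e2 : (∑' k : ℤ, Complex.exp (-(π ^ 2 / c) * (k : ℂ) ^ 2 - 2 * π * Complex.I * u * k)) =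
      1 / ((Real.sqrt (π / c) : ℝ) : ℂ) * (thetaShift c u : ℂ) := by
    rw [← h]
    refine tsum_congr fun n => ?_
    congr 1
    push_cast
    ring
  rw [e2]
  field_simp

/-- Partial Fourier transform of the summand of `latTheta p x s`, with `z = (n, k)` where `k` is
dual to `m`. -/
def dualTerm (p x s : ℝ) (z : ℤ × ℤ) : ℂ :=
  Complex.exp (-((p * (z.1 : ℝ) ^ 2 + π ^ 2 / p * (z.2 : ℝ) ^ 2) / s : ℝ) -
    2 * π * Complex.I * x * (z.1 * z.2))

lemma summable_dualTerm {p s : ℝ} (x : ℝ) (hp : 0 < p) (hs : 0 < s) :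
    Summable (dualTerm p x s) := by
  have h1 : 0 < p / s := div_pos hp hs
  have h2 : 0 < π ^ 2 / p / s := by positivity
  refine Summable.of_norm ?_
  refine ((summable_gauss h1).mul_of_nonneg (summable_gauss h2)
    (fun _ => (Real.exp_pos _).le) (fun _ => (Real.exp_pos _).le)).congr fun z => ?_
  rw [dualTerm, Complex.norm_exp, ← Real.exp_add]
  congr 1
  have : (2 * (π : ℂ) * Complex.I * x * (z.1 * z.2)).re = 0 := by
    rw [show (2 * (π : ℂ) * Complex.I * x * (z.1 * z.2)) =
      ((2 * π * x * (z.1 * z.2) : ℝ) : ℂ) * Complex.I by push_cast; ring]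
    simp [Complex.mul_re]
  rw [Complex.sub_re, this, ← Complex.ofReal_neg, Complex.ofReal_re]
  ring

lemma latTheta_eq_dual {p s : ℝ} (x : ℝ) (hp : 0 < p) (hs : 0 < s) :
    (latTheta p x s : ℂ) = (Real.sqrt (π / (p * s)) : ℝ) * ∑' z, dualTerm p x s z := by
  rw [(summable_dualTerm x hp hs).tsum_prod, ← tsum_mul_left]
  rw [← (hasSum_latTheta_rows x hp hs).tsum_eq, Complex.ofReal_tsum]
  refine tsum_congr fun n => ?_
  rw [Complex.ofReal_mul, thetaShift_poisson (mul_pos hp hs), mul_left_comm, ← tsum_mul_left]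
  congr 1
  refine tsum_congr fun k => ?_
  rw [dualTerm, Complex.ofReal_exp, ← Complex.exp_add]
  congr 1
  have hp' : (p : ℂ) ≠ 0 := Complex.ofReal_ne_zero.2 hp.ne'
  have hs' : (s : ℂ) ≠ 0 := Complex.ofReal_ne_zero.2 hs.ne'
  push_cast
  field_simp
  ring

/-- Unimodular lattices of the plane are isodual, so the theta function has a functional
equation. -/
lemma latTheta_dual {p s : ℝ} (x : ℝ) (hp : 0 < p) (hs : 0 < s) :
    latTheta p x s = π / p * latTheta (π ^ 2 / p) x s := by
  have hp2 : 0 < π ^ 2 / p := by positivity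
  have hD : ∑' z, dualTerm (π ^ 2 / p) x s z = ∑' z, dualTerm p x s z := by
    rw [← (Equiv.prodComm ℤ ℤ).tsum_eq]
    refine tsum_congr fun z => ?_
    simp only [dualTerm, Equiv.prodComm_apply, Prod.fst_swap, Prod.snd_swap]
    have : π ^ 2 / (π ^ 2 / p) = p := by field_simp
    rw [this]
    congr 1
    push_cast
    ring
  have hsq : Real.sqrt (π / (p * s)) = π / p * Real.sqrt (π / (π ^ 2 / p * s)) := by
    rw [← Real.sqrt_sq (show 0 ≤ π / p by positivity), ← Real.sqrt_mul (by positivity)]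
    congr 1
    field_simp
  have h1 := latTheta_eq_dual x hp hs
  have h2 := latTheta_eq_dual x hp2 hs
  rw [hD] at h2
  have : (latTheta p x s : ℂ) = ((π / p * latTheta (π ^ 2 / p) x s : ℝ) : ℂ) := by
    rw [h1, Complex.ofReal_mul, h2, hsq]
    push_cast
    ring
  exact Complex.ofReal_injective this

/-- Montgomery's theorem: at every inverse temperature the triangular lattice is the strict
minimiser of the theta function in the fundamental domain. -/
lemma latTheta_hex_lt {p x s : ℝ} (hp : 0 < p) (hx0 : 0 ≤ x) (hx1 : x ≤ 1 / 2)
    (hs : 0 < s) (hs1 : s ≤ hexS) (hne : ¬ (x = 1 / 2 ∧ s = hexS)) :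
    latTheta p (1 / 2) hexS < latTheta p x s := by
  rcases le_or_gt π p with h | h
  · exact latTheta_hex_lt_of_pi_le h hx0 hx1 hs hs1 hne
  · have h' : π ≤ π ^ 2 / p := by
      rw [le_div_iff₀ hp]; nlinarith [Real.pi_pos]
    rw [latTheta_dual x hp hs, latTheta_dual (1 / 2) hp hexS_pos]
    exact mul_lt_mul_of_pos_left (latTheta_hex_lt_of_pi_le h' hx0 hx1 hs hs1 hne)
      (div_pos Real.pi_pos hp)

/-! ### The energy as a superposition of theta functions -/

/-- Integrand of the representation of `K₀` as a superposition of Gaussians. -/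
def besselKernel (b σ : ℝ) : ℝ := Real.exp (-Real.exp σ - b * Real.exp (-σ))

lemma continuous_besselKernel (b : ℝ) : Continuous (besselKernel b) := by
  unfold besselKernel; fun_prop

lemma besselKernel_pos (b σ : ℝ) : 0 < besselKernel b σ := Real.exp_pos _

/-- The substitution `t = σ + log (2 / ρ)` in the even integral over the whole line. -/
lemma K0_eq_integral {ρ : ℝ} (hρ : 0 < ρ) :
    K0 ρ = 1 / 2 * ∫ σ : ℝ, besselKernel (ρ ^ 2 / 4) σ := by
  have h1 := integral_comp_abs (f := fun t => Real.exp (-ρ * Real.cosh t))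
  simp only [Real.cosh_abs] at h1
  have h2 := MeasureTheory.integral_add_right_eq_self (μ := MeasureTheory.volume)
    (fun t : ℝ => Real.exp (-ρ * Real.cosh t)) (Real.log (2 / ρ))
  rw [K0]
  have h3 : ∫ σ : ℝ, besselKernel (ρ ^ 2 / 4) σ =
      ∫ t : ℝ, Real.exp (-ρ * Real.cosh (t + Real.log (2 / ρ))) := by
    congr 1
    funext σ
    rw [besselKernel, Real.cosh_eq, neg_add, Real.exp_add, Real.exp_add, Real.exp_neg (Real.log _),
      Real.exp_log (by positivity)]
    congr 1
    field_simp
    ring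
  rw [h3, h2, h1]
  ring

lemma exp_two_mul_sub_exp_le (σ : ℝ) : Real.exp (2 * σ - Real.exp σ) ≤ 12 * (1 + σ ^ 2)⁻¹ := by
  have habs : Real.exp (2 * σ - Real.exp σ) ≤ 6 * Real.exp (-|σ|) := by
    rcases le_total 0 σ with h | h
    · have h1 := Real.pow_div_factorial_le_exp (x := Real.exp σ) (Real.exp_pos _).le 3
      have e : Real.exp (2 * σ - Real.exp σ) * Real.exp (Real.exp σ) = Real.exp (2 * σ) := by
        rw [← Real.exp_add]; ring_nf
      have e2 : 6 * Real.exp (-|σ|) * ((Real.exp σ) ^ 3 / (Nat.factorial 3 : ℝ)) =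
          Real.exp (2 * σ) := by
        have : (Nat.factorial 3 : ℝ) = 6 := by norm_num [Nat.factorial]
        rw [this, abs_of_nonneg h, ← Real.exp_nat_mul]
        rw [show 2 * σ = -σ + (3 : ℕ) * σ by push_cast; ring, Real.exp_add]
        ring
      have h2 := mul_le_mul_of_nonneg_left h1 (show 0 ≤ 6 * Real.exp (-|σ|) by positivity)
      rw [e2, ← e] at h2
      exact le_of_mul_le_mul_right h2 (Real.exp_pos _)
    · rw [abs_of_nonpos h, neg_neg]
      have : Real.exp (2 * σ - Real.exp σ) ≤ Real.exp σ :=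
        Real.exp_le_exp.2 (by linarith [Real.exp_pos σ])
      linarith [Real.exp_pos σ]
  refine habs.trans ?_
  have h := Real.quadratic_le_exp_of_nonneg (abs_nonneg σ)
  rw [sq_abs] at h
  rw [Real.exp_neg, ← div_eq_mul_inv, ← div_eq_mul_inv, div_le_div_iff₀ (Real.exp_pos _)
    (by positivity)]
  linarith [abs_nonneg σ]

/-- Quadratic decay in `b`, from `exp (-y) ≤ 2 / y²`, makes the lattice sum of the integrals
converge. -/
lemma besselKernel_le {b : ℝ} (hb : 0 < b) (σ : ℝ) :
    besselKernel b σ ≤ (b ^ 2)⁻¹ * (24 * (1 + σ ^ 2)⁻¹) := by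
  have h1 := Real.pow_div_factorial_le_exp (x := b * Real.exp (-σ)) (by positivity) 2
  have e : besselKernel b σ * Real.exp (b * Real.exp (-σ)) = Real.exp (-Real.exp σ) := by
    rw [besselKernel, ← Real.exp_add]; ring_nf
  have h2 := mul_le_mul_of_nonneg_left h1 (besselKernel_pos b σ).le
  have h3 := exp_two_mul_sub_exp_le σ
  rw [e] at h2
  have e3 : Real.exp (-σ) ^ 2 * Real.exp (2 * σ) = 1 := by
    rw [← Real.exp_nat_mul, ← Real.exp_add]; simp
  have e4 : Real.exp (-Real.exp σ) * Real.exp (2 * σ) = Real.exp (2 * σ - Real.exp σ) := by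
    rw [← Real.exp_add]; ring_nf
  have h4 := mul_le_mul_of_nonneg_right h2 (Real.exp_pos (2 * σ)).le
  have e5 : besselKernel b σ * ((b * Real.exp (-σ)) ^ 2 / (Nat.factorial 2 : ℝ)) *
      Real.exp (2 * σ) = besselKernel b σ * b ^ 2 / 2 := by
    have : (Nat.factorial 2 : ℝ) = 2 := by norm_num [Nat.factorial]
    rw [this]
    linear_combination (besselKernel b σ * b ^ 2 / 2) * e3
  rw [e4, e5] at h4
  rw [inv_mul_eq_div, le_div_iff₀ (by positivity)]
  linarith

lemma integrable_besselKernel {b : ℝ} (hb : 0 < b) :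
    MeasureTheory.Integrable (besselKernel b) := by
  refine ((integrable_inv_one_add_sq.const_mul 24).const_mul (b ^ 2)⁻¹).mono'
    (continuous_besselKernel b).aestronglyMeasurable (Filter.Eventually.of_forall fun σ => ?_)
  rw [Real.norm_of_nonneg (besselKernel_pos b σ).le]
  exact besselKernel_le hb σ

lemma WTF_eq_integral {R : ℝ} (hR : 0 < R) :
    WTF (Real.sqrt R) = 1 / 4 * ∫ σ : ℝ, besselKernel (π / 4 * R) σ := by
  rw [WTF, K0_eq_integral (by positivity), mul_pow, Real.sq_sqrt Real.pi_pos.le,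
    Real.sq_sqrt hR.le, show π * R / 4 = π / 4 * R by ring]
  ring

lemma summable_inv_one_add_int_sq : Summable fun n : ℤ => (1 + (n : ℝ) ^ 2)⁻¹ := by
  have h1 := (Real.summable_one_div_int_pow (p := 2)).2 (by norm_num)
  have h2 := h1.add (hasSum_ite_eq (0 : ℤ) (1 : ℝ)).summable
  refine Summable.of_nonneg_of_le (fun _ => by positivity) (fun n => ?_) h2
  by_cases h : n = 0
  · subst h; simp
  · have : (0 : ℝ) < (n : ℝ) ^ 2 := by positivity
    rw [if_neg h, add_zero, one_div]
    exact inv_anti₀ this (by linarith)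

lemma one_le_sq_add_sq {z : ℤ × ℤ} (hz : z ≠ 0) : (1 : ℝ) ≤ (z.1 : ℝ) ^ 2 + (z.2 : ℝ) ^ 2 := by
  have : (1 : ℤ) ≤ z.1 ^ 2 + z.2 ^ 2 := by
    by_contra h
    have h1 : z.1 = 0 := by nlinarith [sq_nonneg z.1, sq_nonneg z.2]
    have h2 : z.2 = 0 := by nlinarith [sq_nonneg z.1, sq_nonneg z.2]
    exact hz (Prod.ext h1 h2)
  exact_mod_cast this

lemma latForm_pos (x : ℝ) {s : ℝ} (hs : 0 < s) {z : ℤ × ℤ} (hz : z ≠ 0) : 0 < latForm x s z := by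
  obtain ⟨κ, hκ, h⟩ := exists_latForm_ge x hs
  exact (mul_pos hκ (by linarith [one_le_sq_add_sq hz])).trans_le (h z)

lemma summable_inv_latForm_sq {c s : ℝ} (x : ℝ) (hc : 0 < c) (hs : 0 < s) :
    Summable fun z : {z : ℤ × ℤ // z ≠ 0} => ((c * latForm x s z) ^ 2)⁻¹ := by
  obtain ⟨κ, hκ, h⟩ := exists_latForm_ge x hs
  have h1 := (summable_inv_one_add_int_sq.mul_of_nonneg summable_inv_one_add_int_sq
    (fun _ => by positivity) (fun _ => by positivity)).mul_left (4 * ((c * κ) ^ 2)⁻¹)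
  refine Summable.of_nonneg_of_le (fun _ => by positivity) (fun z => ?_) (h1.subtype _)
  have h2 := one_le_sq_add_sq z.2
  have h3 := h z.1
  change _ ≤ 4 * ((c * κ) ^ 2)⁻¹ * ((1 + (z.1.1 : ℝ) ^ 2)⁻¹ * (1 + (z.1.2 : ℝ) ^ 2)⁻¹)
  have e : 4 * ((c * κ) ^ 2)⁻¹ * ((1 + (z.1.1 : ℝ) ^ 2)⁻¹ * (1 + (z.1.2 : ℝ) ^ 2)⁻¹) =
      ((c * κ) ^ 2 * ((1 + (z.1.1 : ℝ) ^ 2) * (1 + (z.1.2 : ℝ) ^ 2) / 4))⁻¹ := by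
    field_simp
  rw [e]
  refine inv_anti₀ (by positivity) ?_
  have h4 : (1 + (z.1.1 : ℝ) ^ 2) * (1 + (z.1.2 : ℝ) ^ 2) / 4 ≤
      ((z.1.1 : ℝ) ^ 2 + (z.1.2 : ℝ) ^ 2) ^ 2 := by
    nlinarith [mul_le_mul (show 1 + (z.1.1 : ℝ) ^ 2 ≤ 2 * ((z.1.1 : ℝ) ^ 2 + (z.1.2 : ℝ) ^ 2) by
      linarith [sq_nonneg (z.1.2 : ℝ)]) (show 1 + (z.1.2 : ℝ) ^ 2 ≤
      2 * ((z.1.1 : ℝ) ^ 2 + (z.1.2 : ℝ) ^ 2) by linarith [sq_nonneg (z.1.1 : ℝ)])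
      (by positivity) (by positivity)]
  calc _ ≤ (c * κ) ^ 2 * ((z.1.1 : ℝ) ^ 2 + (z.1.2 : ℝ) ^ 2) ^ 2 := by gcongr
    _ = (c * (κ * ((z.1.1 : ℝ) ^ 2 + (z.1.2 : ℝ) ^ 2))) ^ 2 := by ring
    _ ≤ _ := by gcongr

/-- The integrand of the energy: a theta function without the contribution of the origin. -/
def thetaIntegrand (c x s σ : ℝ) : ℝ :=
  Real.exp (-Real.exp σ) * (latTheta (c * Real.exp (-σ)) x s - 1)

lemma hasSum_thetaIntegrand {c s : ℝ} (x : ℝ) (hc : 0 < c) (hs : 0 < s) (σ : ℝ) :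
    HasSum (fun z : {z : ℤ × ℤ // z ≠ 0} => besselKernel (c * latForm x s z) σ)
      (thetaIntegrand c x s σ) := by
  have hp : 0 < c * Real.exp (-σ) := by positivity
  have hsum := summable_latTheta x hp hs
  have h0 : Real.exp (-(c * Real.exp (-σ)) * latForm x s 0) = 1 := by simp [latForm]
  have hcompl : HasSum (fun z : {z : ℤ × ℤ // z ≠ 0} =>
      Real.exp (-(c * Real.exp (-σ)) * latForm x s z)) (latTheta (c * Real.exp (-σ)) x s - 1) := by
    have h1 := hsum.tsum_subtype_add_tsum_subtype_compl ({0} : Set (ℤ × ℤ))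
    rw [tsum_singleton (0 : ℤ × ℤ) (fun z => Real.exp (-(c * Real.exp (-σ)) * latForm x s z)),
      h0] at h1
    rw [latTheta, ← h1, add_sub_cancel_left]
    exact (hsum.subtype _).hasSum
  refine (congrArg (HasSum · _) (funext fun z => ?_)).mpr (hcompl.mul_left (Real.exp (-Real.exp σ)))
  rw [besselKernel, ← Real.exp_add]
  ring_nf

lemma continuous_thetaIntegrand {c s : ℝ} (x : ℝ) (hc : 0 < c) (hs : 0 < s) :
    Continuous (thetaIntegrand c x s) := by
  have e : thetaIntegrand c x s =
      fun σ => ∑' z : {z : ℤ × ℤ // z ≠ 0}, besselKernel (c * latForm x s z) σ :=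
    funext fun σ => (hasSum_thetaIntegrand x hc hs σ).tsum_eq.symm
  rw [e]
  refine continuous_tsum (fun z => continuous_besselKernel _)
    ((summable_inv_latForm_sq x hc hs).mul_right 24) fun z σ => ?_
  rw [Real.norm_of_nonneg (besselKernel_pos _ σ).le]
  refine (besselKernel_le (mul_pos hc (latForm_pos x hs z.2)) σ).trans ?_
  have : (1 + σ ^ 2)⁻¹ ≤ 1 := inv_le_one_of_one_le₀ (by nlinarith [sq_nonneg σ])
  gcongr
  linarith

lemma integrable_thetaIntegrand {c s : ℝ} (x : ℝ) (hc : 0 < c) (hs : 0 < s) :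
    MeasureTheory.Integrable (thetaIntegrand c x s) := by
  refine ((integrable_inv_one_add_sq.const_mul 24).const_mul
    (∑' z : {z : ℤ × ℤ // z ≠ 0}, ((c * latForm x s z) ^ 2)⁻¹)).mono'
    (continuous_thetaIntegrand x hc hs).aestronglyMeasurable
    (Filter.Eventually.of_forall fun σ => ?_)
  have h := hasSum_thetaIntegrand x hc hs σ
  rw [Real.norm_of_nonneg (h.nonneg fun z => (besselKernel_pos _ σ).le)]
  exact hasSum_le (fun z => besselKernel_le (mul_pos hc (latForm_pos x hs z.2)) σ) h
    ((summable_inv_latForm_sq x hc hs).hasSum.mul_right _)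

/-- The Thomas-Fermi energy is a superposition of theta functions. -/
lemma tsum_WTF_eq {A s : ℝ} (x : ℝ) (hA : 0 < A) (hs : 0 < s) :
    ∑' z : {z : ℤ × ℤ // z ≠ 0}, WTF (Real.sqrt (A * latForm x s z)) =
      1 / 4 * ∫ σ : ℝ, thetaIntegrand (π / 4 * A) x s σ := by
  have hc : 0 < π / 4 * A := by positivity
  have hb : ∀ z : {z : ℤ × ℤ // z ≠ 0}, 0 < π / 4 * A * latForm x s z := fun z =>
    mul_pos hc (latForm_pos x hs z.2)
  have h := MeasureTheory.hasSum_integral_of_summable_integral_norm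
    (μ := MeasureTheory.volume)
    (F := fun (z : {z : ℤ × ℤ // z ≠ 0}) σ => besselKernel (π / 4 * A * latForm x s z) σ)
    (fun z => integrable_besselKernel (hb z)) (by
      refine Summable.of_nonneg_of_le
        (fun z => MeasureTheory.integral_nonneg fun σ => norm_nonneg _) (fun z => ?_)
        ((summable_inv_latForm_sq x hc hs).mul_right (∫ σ : ℝ, 24 * (1 + σ ^ 2)⁻¹))
      rw [← MeasureTheory.integral_const_mul]
      refine MeasureTheory.integral_mono (integrable_besselKernel (hb z)).norm
        ((integrable_inv_one_add_sq.const_mul 24).const_mul _) fun σ => ?_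
      simp only [Real.norm_of_nonneg (besselKernel_pos _ σ).le]
      exact besselKernel_le (hb z) σ)
  simp only [fun σ => (hasSum_thetaIntegrand x hc hs σ).tsum_eq] at h
  rw [← h.tsum_eq, ← tsum_mul_left]
  refine tsum_congr fun z => ?_
  rw [WTF_eq_integral (mul_pos hA (latForm_pos x hs z.2)), mul_assoc]

lemma tsum_WTF_lt {A x s : ℝ} (hA : 0 < A) (hx0 : 0 ≤ x) (hx1 : x ≤ 1 / 2)
    (hs : 0 < s) (hs1 : s ≤ hexS) (hne : ¬ (x = 1 / 2 ∧ s = hexS)) :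
    ∑' z : {z : ℤ × ℤ // z ≠ 0}, WTF (Real.sqrt (A * latForm (1 / 2) hexS z)) <
      ∑' z : {z : ℤ × ℤ // z ≠ 0}, WTF (Real.sqrt (A * latForm x s z)) := by
  have hc : 0 < π / 4 * A := by positivity
  rw [tsum_WTF_eq x hA hs, tsum_WTF_eq (1 / 2) hA hexS_pos]
  have hlt : ∀ σ, 0 < thetaIntegrand (π / 4 * A) x s σ -
      thetaIntegrand (π / 4 * A) (1 / 2) hexS σ := fun σ => by
    have := latTheta_hex_lt (p := π / 4 * A * Real.exp (-σ)) (by positivity) hx0 hx1 hs hs1 hne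
    rw [thetaIntegrand, thetaIntegrand, ← mul_sub]
    exact mul_pos (Real.exp_pos _) (by linarith)
  have hi := integrable_thetaIntegrand x hc hs
  have hi' := integrable_thetaIntegrand (1 / 2) hc hexS_pos
  have h : 0 < ∫ σ : ℝ, (thetaIntegrand (π / 4 * A) x s σ -
      thetaIntegrand (π / 4 * A) (1 / 2) hexS σ) := by
    rw [MeasureTheory.integral_pos_iff_support_of_nonneg (fun σ => (hlt σ).le) (hi.sub hi')]
    have : Function.support (fun σ => thetaIntegrand (π / 4 * A) x s σ -
      thetaIntegrand (π / 4 * A) (1 / 2) hexS σ) = Set.univ :=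
      Set.eq_univ_of_forall fun σ => (hlt σ).ne'
    rw [this]
    simp
  rw [MeasureTheory.integral_sub hi hi'] at h
  linarith

/-! ### Gauss reduction and congruence of lattices -/

open scoped RealInnerProductSpace in
lemma norm_sq_comb (u v : R2) (m n : ℝ) :
    ‖m • u + n • v‖ ^ 2 = m ^ 2 * ‖u‖ ^ 2 + 2 * m * n * ⟪u, v⟫ + n ^ 2 * ‖v‖ ^ 2 := by
  rw [norm_add_sq_real, norm_smul, norm_smul, mul_pow, mul_pow, Real.norm_eq_abs,
    Real.norm_eq_abs, sq_abs, sq_abs, real_inner_smul_left, real_inner_smul_right]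
  ring

open scoped RealInnerProductSpace in
lemma inner_comb (u v : R2) (a b c d : ℝ) :
    ⟪a • u + b • v, c • u + d • v⟫ =
      a * c * ‖u‖ ^ 2 + (a * d + b * c) * ⟪u, v⟫ + b * d * ‖v‖ ^ 2 := by
  simp only [inner_add_left, inner_add_right, real_inner_smul_left, real_inner_smul_right,
    real_inner_self_eq_norm_sq, real_inner_comm v u]
  ring

/-- The Gram matrix of `(u, v)` is that of the form `A * latForm x s`, with `u` and `v` in the roles
of `1` and `x + i / s`. -/
def HasForm (u v : R2) (A x s : ℝ) : Prop :=
  ‖u‖ ^ 2 = A * s ∧ inner ℝ u v = A * (s * x) ∧ ‖v‖ ^ 2 = A * (s * x ^ 2 + 1 / s)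

lemma HasForm.norm_sq {u v : R2} {A x s : ℝ} (h : HasForm u v A x s) (z : ℤ × ℤ) :
    ‖(z.2 : ℝ) • u + (z.1 : ℝ) • v‖ ^ 2 = A * latForm x s z := by
  obtain ⟨h1, h2, h3⟩ := h
  rw [norm_sq_comb, h1, h2, h3, latForm]
  ring

lemma ETF_eq {L : Set R2} {u v : R2} {A x s : ℝ} (hL : LatticeBasis L u v)
    (h : HasForm u v A x s) :
    ETF L = ∑' z : {z : ℤ × ℤ // z ≠ 0}, WTF (Real.sqrt (A * latForm x s z)) := by
  obtain ⟨hli, rfl⟩ := hL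
  have hinj : ∀ m n m' n' : ℤ, (m : ℝ) • u + (n : ℝ) • v = (m' : ℝ) • u + (n' : ℝ) • v →
      m = m' ∧ n = n' := fun m n m' n' e => by
    have := hli.eq_of_pair e
    exact ⟨by exact_mod_cast this.1, by exact_mod_cast this.2⟩
  let e : {z : ℤ × ℤ // z ≠ 0} →
      {y : R2 // y ∈ {y : R2 | ∃ m n : ℤ, y = (m : ℝ) • u + (n : ℝ) • v} ∧ y ≠ 0} :=
    fun z => ⟨(z.1.2 : ℝ) • u + (z.1.1 : ℝ) • v, ⟨z.1.2, z.1.1, rfl⟩, fun h0 => by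
      obtain ⟨h1, h2⟩ := hinj z.1.2 z.1.1 0 0 (by rw [h0]; simp)
      exact z.2 (Prod.ext h2 h1)⟩
  have he : Function.Bijective e := by
    constructor
    · intro z z' hz
      obtain ⟨h1, h2⟩ := hinj _ _ _ _ (congrArg Subtype.val hz)
      exact Subtype.ext (Prod.ext h2 h1)
    · rintro ⟨y, ⟨m, n, rfl⟩, h0⟩
      exact ⟨⟨(n, m), by rintro ⟨⟩; simp at h0⟩, rfl⟩
  rw [ETF, ← (Equiv.ofBijective e he).tsum_eq]
  refine tsum_congr fun z => ?_
  rw [← h.norm_sq, Real.sqrt_sq (norm_nonneg _)]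
  rfl

/-- A unimodular change of basis. -/
lemma LatticeBasis.change {L : Set R2} {u v : R2} (hL : LatticeBasis L u v) {a b c d : ℤ}
    (hdet : (a * d - b * c) ^ 2 = 1) :
    LatticeBasis L ((d : ℝ) • u + (c : ℝ) • v) ((b : ℝ) • u + (a : ℝ) • v) := by
  obtain ⟨hli, rfl⟩ := hL
  have hdet' : ((a : ℝ) * d - b * c) ^ 2 = 1 := by exact_mod_cast hdet
  constructor
  · rw [LinearIndependent.pair_iff] at hli ⊢
    intro p q h
    obtain ⟨h1, h2⟩ := hli (p * d + q * b) (p * c + q * a) (by rw [← h]; module)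
    constructor
    · linear_combination (-p) * hdet' + ((a : ℝ) * d - b * c) * (a * h1 - b * h2)
    · linear_combination (-q) * hdet' + ((a : ℝ) * d - b * c) * (d * h2 - c * h1)
  · ext y
    constructor
    · rintro ⟨m, n, rfl⟩
      refine ⟨(a * d - b * c) * (m * a - n * b), (a * d - b * c) * (n * d - m * c), ?_⟩
      push_cast
      have e1 : (m : ℝ) = m * ((a : ℝ) * d - b * c) ^ 2 := by rw [hdet', mul_one]
      have e2 : (n : ℝ) = n * ((a : ℝ) * d - b * c) ^ 2 := by rw [hdet', mul_one]
      nth_rewrite 1 [e1, e2]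
      module
    · rintro ⟨m, n, rfl⟩
      exact ⟨m * d + n * b, m * c + n * a, by push_cast; module⟩

lemma HasForm.neg_right {u v : R2} {A x s : ℝ} (h : HasForm u v A x s) :
    HasForm u (-v) A (-x) s := by
  obtain ⟨h1, h2, h3⟩ := h
  refine ⟨h1, ?_, ?_⟩
  · rw [inner_neg_right, h2]; ring
  · rw [norm_neg, h3]; ring

lemma gram_det_of_area {u v : R2} {A : ℝ}
    (h : ‖u‖ * ‖v‖ * |Real.sin (InnerProductGeometry.angle u v)| = A) :
    ‖u‖ ^ 2 * ‖v‖ ^ 2 - (inner ℝ u v) ^ 2 = A ^ 2 := by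
  rw [← h, mul_pow, mul_pow, sq_abs, ← InnerProductGeometry.cos_angle_mul_norm_mul_norm u v,
    Real.sin_sq]
  ring

/-- Gauss reduction: moving the modulus of the lattice into the fundamental domain of `SL(2, ℤ)`. -/
lemma exists_reduced_basis {L : Set R2} {A : ℝ} (hA : 0 < A) (hL : HasArea L A) :
    ∃ (u v : R2) (x s : ℝ), LatticeBasis L u v ∧ HasForm u v A x s ∧ 0 ≤ x ∧ x ≤ 1 / 2 ∧
      0 < s ∧ s ≤ hexS := by
  obtain ⟨u, v, hb, harea⟩ := hL
  have hdet := gram_det_of_area harea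
  have hu : u ≠ 0 := by simpa using hb.1.ne_zero 0
  have hα : 0 < ‖u‖ ^ 2 := by positivity
  have hrel (a b : ℝ) := norm_sq_comb u v a b
  have hrel' (a b c d : ℝ) := inner_comb u v a b c d
  set α := ‖u‖ ^ 2
  set β : ℝ := inner ℝ u v
  set γ := ‖v‖ ^ 2
  have hz : 0 < (⟨β / α, A / α⟩ : ℂ).im := div_pos hA hα
  obtain ⟨g, hg⟩ := ModularGroup.exists_smul_mem_fd (⟨⟨β / α, A / α⟩, hz⟩ : UpperHalfPlane)
  set τ : UpperHalfPlane := ⟨⟨β / α, A / α⟩, hz⟩ with hτ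
  have hg1 : 1 ≤ (g • τ).re ^ 2 + (g • τ).im ^ 2 := by
    have := hg.1
    rw [Complex.normSq_apply] at this
    simpa [sq] using this
  have hg2 : |(g • τ).re| ≤ 1 / 2 := hg.2
  have hY : 0 < (g • τ).im := (g • τ).im_pos
  have hdetg : g 0 0 * g 1 1 - g 0 1 * g 1 0 = 1 := by
    rw [← Matrix.det_fin_two]; exact g.2
  have hne : ((g 1 0 : ℝ) : ℂ) * τ + ((g 1 1 : ℝ) : ℂ) ≠ 0 := UpperHalfPlane.denom_ne_zero g τ
  have hmul : ((g • τ : UpperHalfPlane) : ℂ) * (((g 1 0 : ℝ) : ℂ) * τ + ((g 1 1 : ℝ) : ℂ)) =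
      ((g 0 0 : ℝ) : ℂ) * τ + ((g 0 1 : ℝ) : ℂ) := by
    rw [UpperHalfPlane.coe_specialLinearGroup_apply]
    simp only [algebraMap_int_eq, eq_intCast]
    exact div_mul_cancel₀ _ hne
  set X := (g • τ).re
  set Y := (g • τ).im
  set a := g 0 0
  set b := g 0 1
  set c := g 1 0
  set d := g 1 1
  have hdetr : (a : ℝ) * d - b * c = 1 := by exact_mod_cast hdetg
  have hτre : τ.re = β / α := rfl
  have hτim : τ.im = A / α := rfl
  have hre := congrArg Complex.re hmul
  have him := congrArg Complex.im hmul
  simp only [Complex.mul_re, Complex.mul_im, Complex.add_re, Complex.add_im, Complex.ofReal_re,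
    Complex.ofReal_im, zero_mul, sub_zero, add_zero, UpperHalfPlane.coe_re,
    UpperHalfPlane.coe_im, hτre, hτim] at hre him
  change X * _ - Y * _ = _ at hre
  change X * _ + Y * _ = _ at him
  set p := c * β + d * α with hp
  set q := c * A with hq
  have hre' : a * β + b * α = X * p - Y * q := by
    rw [hp, hq]; field_simp at hre; linear_combination -hre
  have him' : a * A = X * q + Y * p := by
    rw [hp, hq]; field_simp at him; linear_combination -him
  -- the determinant of `g` converts the two relations into the transformation law of `im`
  have hN : Y * (p ^ 2 + q ^ 2) = A * α := by
    have : p * (X * q + Y * p) - q * (X * p - Y * q) = A * α := by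
      rw [← hre', ← him', hp, hq]; linear_combination A * α * hdetr
    linear_combination this
  have hN' : p ^ 2 + q ^ 2 = A * α / Y := by
    rw [eq_div_iff hY.ne']; linear_combination hN
  have hform : HasForm ((d : ℝ) • u + (c : ℝ) • v) ((b : ℝ) • u + (a : ℝ) • v) A X (1 / Y) := by
    refine ⟨?_, ?_, ?_⟩
    · rw [hrel]
      apply mul_left_cancel₀ hα.ne'
      have : α * (A * (1 / Y)) = p ^ 2 + q ^ 2 := by rw [hN']; ring
      rw [this, hp, hq]
      linear_combination (c : ℝ) ^ 2 * hdet
    · rw [hrel']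
      apply mul_left_cancel₀ hα.ne'
      have : α * (A * (1 / Y * X)) = X * (p ^ 2 + q ^ 2) := by rw [hN']; ring
      rw [this]
      have : X * (p ^ 2 + q ^ 2) = p * (X * p - Y * q) + q * (X * q + Y * p) := by ring
      rw [this, ← hre', ← him', hp, hq]
      linear_combination (a : ℝ) * c * hdet
    · rw [hrel]
      apply mul_left_cancel₀ hα.ne'
      have : α * (A * (1 / Y * X ^ 2 + 1 / (1 / Y))) = (X ^ 2 + Y ^ 2) * (p ^ 2 + q ^ 2) := by
        rw [hN']; field_simp
      rw [this]
      have : (X ^ 2 + Y ^ 2) * (p ^ 2 + q ^ 2) = (X * p - Y * q) ^ 2 + (X * q + Y * p) ^ 2 := by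
        ring
      rw [this, ← hre', ← him']
      linear_combination (a : ℝ) ^ 2 * hdet
  have hbasis := hb.change (a := a) (b := b) (c := c) (d := d) (by rw [hdetg]; rfl)
  obtain ⟨hx0, hx1⟩ := abs_le.1 hg2
  have hs : 0 < 1 / Y := by positivity
  have hs1 : 1 / Y ≤ hexS := by
    refine le_of_sq_le_sq ?_ hexS_pos.le
    rw [hexS_sq, div_pow, div_le_iff₀ (by positivity)]
    nlinarith
  rcases le_total 0 X with h | h
  · exact ⟨_, _, X, 1 / Y, hbasis, hform, h, hx1, hs, hs1⟩
  · refine ⟨_, _, -X, 1 / Y, ?_, hform.neg_right, by linarith, by linarith, hs, hs1⟩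
    have := hbasis.change (a := -1) (b := 0) (c := 0) (d := 1) (by norm_num)
    simpa [add_comm] using this

lemma triLattice_basis {A : ℝ} (hA : 0 < A) :
    LatticeBasis (triLattice A) (Real.sqrt (2 * A / Real.sqrt 3) • vec2 1 0)
      (Real.sqrt (2 * A / Real.sqrt 3) • vec2 (1/2) (Real.sqrt 3 / 2)) := by
  refine ⟨?_, rfl⟩
  have hk : Real.sqrt (2 * A / Real.sqrt 3) ≠ 0 := by positivity
  generalize Real.sqrt (2 * A / Real.sqrt 3) = k at hk
  rw [LinearIndependent.pair_iff]
  intro p q h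
  have h0 := congrArg (fun y : R2 => y 0) h
  have h1 := congrArg (fun y : R2 => y 1) h
  simp [vec2, hk] at h0 h1
  subst h1
  simpa [hk] using h0

lemma triLattice_form {A : ℝ} (hA : 0 < A) :
    HasForm (Real.sqrt (2 * A / Real.sqrt 3) • vec2 1 0)
      (Real.sqrt (2 * A / Real.sqrt 3) • vec2 (1/2) (Real.sqrt 3 / 2)) A (1 / 2) hexS := by
  have hk : Real.sqrt (2 * A / Real.sqrt 3) ^ 2 = A * hexS := by
    rw [Real.sq_sqrt (by positivity), hexS]; ring
  have n1 : ‖vec2 1 0‖ ^ 2 = 1 := by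
    simp [vec2, EuclideanSpace.norm_sq_eq, Fin.sum_univ_two]
  have n2 : ‖vec2 (1 / 2) (Real.sqrt 3 / 2)‖ ^ 2 = 1 := by
    simp [vec2, EuclideanSpace.norm_sq_eq, Fin.sum_univ_two, div_pow]; norm_num
  have n3 : inner ℝ (vec2 1 0) (vec2 (1 / 2) (Real.sqrt 3 / 2)) = 1 / 2 := by
    simp [vec2, PiLp.inner_apply, Fin.sum_univ_two]
  have hi : 1 / hexS = 3 / 4 * hexS := by simpa using div_hexS 1
  refine ⟨?_, ?_, ?_⟩
  · rw [norm_smul, mul_pow, Real.norm_eq_abs, sq_abs, hk, n1, mul_one]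
  · rw [real_inner_smul_left, real_inner_smul_right, n3, ← mul_assoc, ← sq, hk]; ring
  · rw [norm_smul, mul_pow, Real.norm_eq_abs, sq_abs, hk, n2, hi]; ring

/-- Lattices with equal Gram matrices are congruent. -/
lemma isRotationOf_of_hasForm {L M : Set R2} {u v u' v' : R2} {A x s : ℝ}
    (hL : LatticeBasis L u v) (hM : LatticeBasis M u' v')
    (h : HasForm u v A x s) (h' : HasForm u' v' A x s) : IsRotationOf L M := by
  obtain ⟨hli, rfl⟩ := hL
  obtain ⟨hli', rfl⟩ := hM
  have hc : Fintype.card (Fin 2) = Module.finrank ℝ R2 := by simp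
  let B := basisOfLinearIndependentOfCardEqFinrank hli hc
  let B' := basisOfLinearIndependentOfCardEqFinrank hli' hc
  let f : R2 ≃ₗ[ℝ] R2 := B'.equiv B (Equiv.refl _)
  have hf0 : f u' = u := by
    have := B'.equiv_apply 0 B (Equiv.refl _)
    simpa [B, B', f] using this
  have hf1 : f v' = v := by
    have := B'.equiv_apply 1 B (Equiv.refl _)
    simpa [B, B', f] using this
  have hf : ∀ m n : ℝ, f (m • u' + n • v') = m • u + n • v := fun m n => by
    rw [map_add, map_smul, map_smul, hf0, hf1]
  have hnorm : ∀ y, ‖f y‖ = ‖y‖ := fun y => by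
    obtain ⟨m, n, rfl⟩ : ∃ m n : ℝ, y = m • u' + n • v' := by
      refine ⟨B'.repr y 0, B'.repr y 1, ?_⟩
      have := B'.sum_repr y
      rw [Fin.sum_univ_two] at this
      simpa [B'] using this.symm
    rw [hf, ← sq_eq_sq₀ (norm_nonneg _) (norm_nonneg _), norm_sq_comb, norm_sq_comb, h.1, h.2.1,
      h.2.2, h'.1, h'.2.1, h'.2.2]
  refine ⟨⟨f, hnorm⟩, ?_⟩
  ext y
  constructor
  · rintro ⟨m, n, rfl⟩
    exact ⟨_, ⟨m, n, rfl⟩, hf m n⟩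
  · rintro ⟨_, ⟨m, n, rfl⟩, rfl⟩
    exact ⟨m, n, hf m n⟩

/-- For every `A > 0`, the triangular lattice `Λ_A` is the unique (up to rotation)
minimizer of the Thomas-Fermi energy among Bravais lattices of area `A`. -/
theorem triangular_minimizes_ETF (A : ℝ) (hA : 0 < A) :
    (∀ L : Set R2, IsBravais L → HasArea L A → ETF (triLattice A) ≤ ETF L) ∧
    (∀ L : Set R2, IsBravais L → HasArea L A → ETF L = ETF (triLattice A) →
      IsRotationOf L (triLattice A)) := by
  have key : ∀ L : Set R2, HasArea L A →
      ETF (triLattice A) < ETF L ∨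
        (ETF (triLattice A) = ETF L ∧ IsRotationOf L (triLattice A)) := by
    intro L hL
    obtain ⟨u, v, x, s, hb, hf, hx0, hx1, hs, hs1⟩ := exists_reduced_basis hA hL
    rw [ETF_eq (triLattice_basis hA) (triLattice_form hA), ETF_eq hb hf]
    by_cases hne : x = 1 / 2 ∧ s = hexS
    · obtain ⟨rfl, rfl⟩ := hne
      exact Or.inr ⟨rfl, isRotationOf_of_hasForm hb (triLattice_basis hA) hf (triLattice_form hA)⟩
    · exact Or.inl (tsum_WTF_lt hA hx0 hx1 hs hs1 hne)
  constructor
  · intro L _ hL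
    rcases key L hL with h | h
    · exact h.le
    · exact h.1.le
  · intro L _ hL he
    rcases key L hL with h | h
    · exact absurd he h.ne'
    · exact h.2
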